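/- arXiv:2509.15431 — 5 statements merged into one kernel-verified Lean document; each statement's English description precedes it below -/
import Mathlib

section
/- If β : 𝔾_a → GL(V) is an n-dimensional linear representation over a field k such that V decomposes into ℓ indecomposable 𝔾_a-subrepresentations, then there is a linear action γ of the torus 𝔾_m^ℓ on V such that γ and β commute. Consequently the invariant ring k[V]^{𝔾_a} is ℤ^ℓ-multigraded: every invariant is a sum of invariants homogeneous with respect to this multigrading. -/
/-!
The torus acts by `z ↦ diag (z_{blk 1}, …, z_{blk n})`.  It commutes with `M(t)` because `M(t)` is
block diagonal: an entry `Mᵢⱼ ≠ 0` forces `blk i = blk j`, so both products have `(i, j)` entry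
`z_{blk i} Mᵢⱼ`.

For the grading, block diagonality says that `xᵢ ↦ Σⱼ Mᵢⱼ(t) xⱼ` only involves variables `xⱼ` of
the same weight as `xᵢ`.  As weights add under multiplication, the co-action sends a monomial to a
polynomial in `t` whose coefficients are homogeneous of the same multidegree
(`GaMatRep.exists_homogeneous_monomial`).  Hence the co-action commutes with the projections onto
multihomogeneous components (`GaMatRep.coeff_polyCoaction_component`), and these projections
preserve invariants.  This argument is valid over every field, including finite ones, where
`k`-points of the torus would not determine the grading.
-/

/-!
STATEMENT 3: If `β : 𝔾ₐ → GL(V)` is an `n`-dimensional linear representation over a field `k`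
such that `V` decomposes into `ℓ` indecomposable `𝔾ₐ`-subrepresentations, then there is a
linear action `γ` of the torus `𝔾ₘ^ℓ` on `V` (acting by a separate scalar on each
indecomposable summand) commuting with `β`.  Consequently the invariant ring `k[V]^{𝔾ₐ}` is
`ℤ^ℓ`-multigraded: every invariant is a sum of invariants homogeneous with respect to this
multigrading.

We encode the representation by a matrix `M` with entries in `k[t]` satisfying `M(0) = 1` and
`M(t₁ + t₂) = M(t₁)·M(t₂)` (an identity of polynomial matrices in two variables).  The
decomposition `V ≅ ⊕ᵢ Vᵢ` is encoded, after a choice of adapted basis, by a surjective block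
function `blk : Fin n → Fin ℓ` such that `M` is block diagonal; `Vᵢ` is the coordinate
subspace of vectors supported on block `i`.  Invariance of a subspace `W` means that the
generic translate of any `v ∈ W` has all its `t`-coefficients in `W`; indecomposability of
a block is phrased in these terms.  The induced `ℤ^ℓ`-grading on `k[V] = k[x₁,…,xₙ]` is the
weighted grading with `weight xⱼ = e_{blk j}`, and an invariant of `k[V]` is an `f` with
`f(M(t)·x) = f(x)`.
-/

open Polynomial

/-- A linear representation of `𝔾ₐ` on `kⁿ`, given by a matrix of polynomials `M(t)` with
`M(0) = 1` and the cocycle identity `M(t₁ + t₂) = M(t₁) M(t₂)` (as polynomial identities). -/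
structure GaMatRep (k : Type*) [CommRing k] (n : ℕ) where
  M : Matrix (Fin n) (Fin n) (Polynomial k)
  id_at_zero : M.map (fun q => q.eval 0) = 1
  cocycle :
    M.map (fun q => q.eval₂ (Polynomial.C.comp Polynomial.C)
        (Polynomial.C Polynomial.X + Polynomial.X)) =
      M.map (fun q => q.map Polynomial.C) * M.map (fun q => Polynomial.C q)

/-- A subspace `W ⊆ kⁿ` is invariant under the `𝔾ₐ`-representation `ρ` if for every `v ∈ W`
every `t`-coefficient of the generic translate `M(t)·v` lies in `W`. -/
def GaMatRep.IsInvariantSubmodule {k : Type*} [CommRing k] {n : ℕ} (ρ : GaMatRep k n)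
    (W : Submodule k (Fin n → k)) : Prop :=
  ∀ v ∈ W, ∀ d : ℕ,
    (fun i => ((ρ.M.mulVec fun j => Polynomial.C (v j)) i).coeff d) ∈ W

/-- The coordinate subspace of vectors supported on the block `blk⁻¹(i)`. -/
def blockSubmodule (k : Type*) [CommRing k] {n ℓ : ℕ} (blk : Fin n → Fin ℓ) (i : Fin ℓ) :
    Submodule k (Fin n → k) where
  carrier := {v | ∀ j, blk j ≠ i → v j = 0}
  add_mem' {a b} ha hb j hj := by simp [ha j hj, hb j hj]
  zero_mem' := by intro j _; rfl
  smul_mem' c a ha := by intro j hj; simp [ha j hj]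

/-- The co-action of `ρ` on the polynomial ring `k[V] = k[x₁,…,xₙ]`:
`xᵢ ↦ Σⱼ Mᵢⱼ(t)·xⱼ`. -/
noncomputable def GaMatRep.polyCoaction {k : Type*} [CommRing k] {n : ℕ} (ρ : GaMatRep k n) :
    MvPolynomial (Fin n) k →ₐ[k] Polynomial (MvPolynomial (Fin n) k) :=
  MvPolynomial.aeval fun i =>
    ∑ j, (ρ.M i j).map (algebraMap k (MvPolynomial (Fin n) k)) *
      Polynomial.C (MvPolynomial.X j)

/-- `f ∈ k[V]` is a `𝔾ₐ`-invariant for `ρ`. -/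
def GaMatRep.IsInvariantPoly {k : Type*} [CommRing k] {n : ℕ} (ρ : GaMatRep k n)
    (f : MvPolynomial (Fin n) k) : Prop :=
  ρ.polyCoaction f = Polynomial.C f

/-- The block-scalar torus action: `z` acts by the diagonal matrix with entries `z (blk j)`. -/
noncomputable def blockTorus (k : Type*) [Field k] {n ℓ : ℕ} (blk : Fin n → Fin ℓ) :
    (Fin ℓ → kˣ) →* Matrix.GeneralLinearGroup (Fin n) k :=
  (Units.map (Matrix.diagonalRingHom (Fin n) k).toMonoidHom).comp
    ((MulEquiv.piUnits (M := fun _ : Fin n => k)).symm.toMonoidHom.comp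
      (MonoidHom.pi fun j => Pi.evalMonoidHom (fun _ : Fin ℓ => kˣ) (blk j)))

lemma coe_blockTorus {k : Type*} [Field k] {n ℓ : ℕ} (blk : Fin n → Fin ℓ) (z : Fin ℓ → kˣ) :
    (blockTorus k blk z : Matrix (Fin n) (Fin n) k) =
      Matrix.diagonal fun j => (z (blk j) : k) := rfl

/-- The co-action of a monomial has all its `t`-coefficients homogeneous of the multidegree of
that monomial.  The degree is existential so that the zero monomial needs no separate treatment. -/
lemma GaMatRep.exists_homogeneous_monomial {k : Type*} [Field k] {n ℓ : ℕ} (ρ : GaMatRep k n)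
    (blk : Fin n → Fin ℓ) (hblock : ∀ i j : Fin n, blk i ≠ blk j → ρ.M i j = 0)
    (s : Fin n →₀ ℕ) (a : k) :
    ∃ m : Fin ℓ →₀ ℕ,
      MvPolynomial.IsWeightedHomogeneous (fun j : Fin n => Finsupp.single (blk j) 1)
        (MvPolynomial.monomial s a) m ∧
      ∀ d, MvPolynomial.IsWeightedHomogeneous (fun j : Fin n => Finsupp.single (blk j) 1)
        ((ρ.polyCoaction (MvPolynomial.monomial s a)).coeff d) m := by
  refine MvPolynomial.induction_on_monomial (motive := fun p => ∃ m : Fin ℓ →₀ ℕ,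
      MvPolynomial.IsWeightedHomogeneous (fun j : Fin n => Finsupp.single (blk j) 1) p m ∧
      ∀ d, MvPolynomial.IsWeightedHomogeneous (fun j : Fin n => Finsupp.single (blk j) 1)
        ((ρ.polyCoaction p).coeff d) m) (fun a => ?_) (fun p i ih => ?_) s a
  · refine ⟨0, MvPolynomial.isWeightedHomogeneous_C _ _, fun d => ?_⟩
    rw [← MvPolynomial.algebraMap_eq, AlgHom.commutes, Polynomial.algebraMap_apply,
      Polynomial.coeff_C]
    split_ifs
    · exact MvPolynomial.isWeightedHomogeneous_C _ _
    · exact MvPolynomial.isWeightedHomogeneous_zero _ _ _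
  · obtain ⟨m, hm, hc⟩ := ih
    refine ⟨m + Finsupp.single (blk i) 1,
      hm.mul (MvPolynomial.isWeightedHomogeneous_X _ _ i), fun d => ?_⟩
    rw [map_mul, Polynomial.coeff_mul]
    refine MvPolynomial.IsWeightedHomogeneous.sum _ _ _ fun x _ => (hc x.1).mul ?_
    rw [GaMatRep.polyCoaction, MvPolynomial.aeval_X, Polynomial.finsetSum_coeff]
    refine MvPolynomial.IsWeightedHomogeneous.sum _ _ _ fun j _ => ?_
    rw [Polynomial.coeff_mul_C, Polynomial.coeff_map, MvPolynomial.algebraMap_eq]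
    by_cases h : blk i = blk j
    · rw [h]
      simpa using (MvPolynomial.isWeightedHomogeneous_C
        (fun j : Fin n => Finsupp.single (blk j) 1) _).mul
        (MvPolynomial.isWeightedHomogeneous_X k (fun j : Fin n => Finsupp.single (blk j) 1) j)
    · simpa [hblock i j h] using MvPolynomial.isWeightedHomogeneous_zero _ _ _

/-- The co-action commutes with the projections onto multihomogeneous components, taken
coefficientwise in `t` on the target. -/
lemma GaMatRep.coeff_polyCoaction_component {k : Type*} [Field k] {n ℓ : ℕ} (ρ : GaMatRep k n)
    (blk : Fin n → Fin ℓ) (hblock : ∀ i j : Fin n, blk i ≠ blk j → ρ.M i j = 0)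
    (m : Fin ℓ →₀ ℕ) (d : ℕ) (f : MvPolynomial (Fin n) k) :
    (ρ.polyCoaction (MvPolynomial.weightedHomogeneousComponent
      (fun j : Fin n => Finsupp.single (blk j) 1) m f)).coeff d =
    MvPolynomial.weightedHomogeneousComponent (fun j : Fin n => Finsupp.single (blk j) 1) m
      ((ρ.polyCoaction f).coeff d) := by
  classical
  induction f using MvPolynomial.induction_on' with
  | monomial s a =>
    obtain ⟨m', hm, hc⟩ := ρ.exists_homogeneous_monomial blk hblock s a
    rw [MvPolynomial.weightedHomogeneousComponent_of_mem hm,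
      MvPolynomial.weightedHomogeneousComponent_of_mem (hc d)]
    split_ifs <;> simp
  | add p q hp hq => simp only [map_add, Polynomial.coeff_add, hp, hq]

/-- **Multigrading lemma.**  If the `n`-dimensional `𝔾ₐ`-representation `ρ` is block diagonal
with respect to the surjective block function `blk : Fin n → Fin ℓ` and each block is an
indecomposable subrepresentation, then there is an action `γ` of `𝔾ₘ^ℓ` on `V`, acting on the
`i`-th block by the scalar `zᵢ`, whose matrices commute with the representation `ρ`;
consequently every `𝔾ₐ`-invariant polynomial is the sum of its `ℤ^ℓ`-multihomogeneous
components, each of which is again invariant. -/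
theorem statement3 (k : Type) [Field k] (n ℓ : ℕ) (ρ : GaMatRep k n)
    (blk : Fin n → Fin ℓ) (hsurj : Function.Surjective blk)
    -- the representation decomposes along the blocks:  V = ⊕ᵢ Vᵢ
    (hblock : ∀ i j : Fin n, blk i ≠ blk j → ρ.M i j = 0)
    -- each summand Vᵢ is an indecomposable subrepresentation
    (hindec : ∀ i : Fin ℓ, ∀ W₁ W₂ : Submodule k (Fin n → k),
      ρ.IsInvariantSubmodule W₁ → ρ.IsInvariantSubmodule W₂ →
      W₁ ⊓ W₂ = ⊥ → W₁ ⊔ W₂ = blockSubmodule k blk i → W₁ = ⊥ ∨ W₂ = ⊥) :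
    (∃ γ : (Fin ℓ → kˣ) →* Matrix.GeneralLinearGroup (Fin n) k,
      (∀ z : Fin ℓ → kˣ, ∀ i : Fin ℓ, ∀ v ∈ blockSubmodule k blk i,
        ((γ z : Matrix (Fin n) (Fin n) k)).mulVec v = (z i : k) • v) ∧
      (∀ z : Fin ℓ → kˣ,
        ((γ z : Matrix (Fin n) (Fin n) k)).map Polynomial.C * ρ.M =
          ρ.M * ((γ z : Matrix (Fin n) (Fin n) k)).map Polynomial.C)) ∧
    (∀ f : MvPolynomial (Fin n) k, ρ.IsInvariantPoly f →
      ∀ m : Fin ℓ →₀ ℕ,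
        ρ.IsInvariantPoly
          (MvPolynomial.weightedHomogeneousComponent
            (fun jj : Fin n => Finsupp.single (blk jj) 1) m f)) := by
  refine ⟨⟨blockTorus k blk, fun z i v hv => ?_, fun z => ?_⟩, fun f hf m => ?_⟩
  · rw [coe_blockTorus]
    ext j
    rw [Matrix.mulVec_diagonal, Pi.smul_apply, smul_eq_mul]
    by_cases h : blk j = i
    · rw [h]
    · rw [hv j h, mul_zero, mul_zero]
  · rw [coe_blockTorus, Matrix.diagonal_map (map_zero _)]
    ext1 i j
    rw [Matrix.diagonal_mul, Matrix.mul_diagonal]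
    by_cases h : blk i = blk j
    · simp only [h, mul_comm]
    · rw [hblock i j h, mul_zero, zero_mul]
  · unfold GaMatRep.IsInvariantPoly at hf ⊢
    ext1 d
    rw [ρ.coeff_polyCoaction_component blk hblock, hf, Polynomial.coeff_C, Polynomial.coeff_C]
    split_ifs
    · rfl
    · exact map_zero _
end

section
/- Let Spec(A) be a 𝔾_a-variety over k with action β, let z₁,…,z_n generate A as a k-algebra, write β^♯(zᵢ) = vᵢ(Z,t), and let (g,h) be a principle pair. Then the rational functions fᵢ(Z) = vᵢ(z₁,…,z_n, −g/h) (for 1 ≤ i ≤ n) are 𝔾_a-invariant elements of the localization A_h, and the map sending r(Z) to r(f₁(Z),…,f_n(Z)) is a k-algebra homomorphism from A_h to A_h^{𝔾_a}. -/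
/-!
STATEMENT 4: Let `Spec A` be a `𝔾ₐ`-variety over `k` with action `β`, let `z₁,…,zₙ` generate
`A` as a `k`-algebra, write `β^♯(zᵢ) = vᵢ(Z,t)`, and let `(g,h)` be a principle pair
(`β^♯(g) = g + t·h` with `h` invariant).  Then the rational functions
`fᵢ(Z) = vᵢ(z₁,…,zₙ, −g/h)` are `𝔾ₐ`-invariant elements of the localization `A_h`, and the
map `r(Z) ↦ r(f₁(Z),…,fₙ(Z))` is a `k`-algebra homomorphism from `A_h` to `A_h^{𝔾ₐ}`.

The localization `A_h` is represented by an arbitrary `IsLocalization.Away h` model `L`;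
the induced `𝔾ₐ`-action on `A_h` is the (unique) action `βL` compatible with `β` under
`algebraMap A L`.  The homomorphism `r ↦ r(f₁,…,fₙ)` is the composition of the co-action with
evaluation at `t = −g/h`, i.e. `r ↦ (βL^♯ r).eval (−g/h)`.
-/
open Polynomial

/-- A (co)action of the additive group scheme `𝔾ₐ` on `Spec A`. -/
structure GaAction (k A : Type*) [CommRing k] [CommRing A] [Algebra k A] where
  coaction : A →ₐ[k] Polynomial A
  counit : ∀ a : A, (coaction a).eval 0 = a
  coassoc : ∀ a : A,
    (coaction a).map coaction.toRingHom =
      (coaction a).eval₂ (Polynomial.C.comp Polynomial.C)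
        (Polynomial.C Polynomial.X + Polynomial.X)

/-- The invariant subalgebra `A^{𝔾ₐ}` of a `𝔾ₐ`-action. -/
def GaAction.invariants {k A : Type*} [CommRing k] [CommRing A] [Algebra k A]
    (β : GaAction k A) : Subalgebra k A where
  carrier := {a | β.coaction a = Polynomial.C a}
  mul_mem' {a b} ha hb := by
    simp only [Set.mem_setOf_eq] at ha hb ⊢
    rw [map_mul, ha, hb, ← map_mul]
  one_mem' := by simp only [Set.mem_setOf_eq, map_one]
  add_mem' {a b} ha hb := by
    simp only [Set.mem_setOf_eq] at ha hb ⊢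
    rw [map_add, ha, hb, ← map_add]
  zero_mem' := by simp only [Set.mem_setOf_eq, map_zero]
  algebraMap_mem' r := by
    simp only [Set.mem_setOf_eq, AlgHom.commutes, Polynomial.algebraMap_apply]

/-!
Put `s = -g/h`. Since `h` is invariant, so is `1/h`, and therefore the co-action on `A_h` sends `s`
to `s - t`: the element `s` moves by `-t`, while coassociativity says that moving `r` by `t` and
then evaluating its own orbit polynomial at `s` shifts the argument by `t`. The two shifts cancel,
so `r ↦ (β^♯ r)(s)` takes invariant values. This map is the composite of two algebra homomorphisms,
and its values on the generators `zᵢ` are the `fᵢ`.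
-/

/-- If `s` satisfies `β^♯ s = s - t`, then evaluating any orbit polynomial `β^♯ r` at `t = s` gives
an invariant. -/
theorem GaAction.eval_coaction_mem_invariants {k B : Type*} [CommRing k] [CommRing B] [Algebra k B]
    (β : GaAction k B) {s : B} (hs : β.coaction s = C s - X) (r : B) :
    (β.coaction r).eval s ∈ β.invariants := by
  change β.coaction.toRingHom ((β.coaction r).eval s) = C ((β.coaction r).eval s)
  have hs' : β.coaction.toRingHom s = C s - X := hs
  rw [← eval_map_apply, hs', β.coassoc, ← coe_evalRingHom, hom_eval₂]
  have h1 : (evalRingHom (C s - X)).comp ((C : B[X] →+* B[X][X]).comp C) = C := by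
    ext; simp
  have h2 : evalRingHom (C s - X) (C X + X : B[X][X]) = C s := by simp
  rw [h1, h2, eval₂_at_apply]

theorem statement4 (k A : Type) [Field k] [CommRing A] [Algebra k A]
    (β : GaAction k A) (n : ℕ) (z : Fin n → A)
    (hgen : Algebra.adjoin k (Set.range z) = ⊤)
    (g h : A) (hinv : h ∈ β.invariants)
    (hpair : β.coaction g = Polynomial.C g + Polynomial.X * Polynomial.C h)
    -- the localization A_h
    (L : Type) [CommRing L] [Algebra k L] [Algebra A L] [IsScalarTower k A L]
    [IsLocalization.Away h L]
    -- the induced 𝔾ₐ-action on A_h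
    (βL : GaAction k L)
    (hcompat : ∀ a : A, βL.coaction (algebraMap A L a) =
      (β.coaction a).map (algebraMap A L)) :
    -- the element -g/h of A_h
    (∀ i : Fin n,
      Polynomial.eval₂ (algebraMap A L)
          (-(algebraMap A L g * IsLocalization.Away.invSelf (S := L) h))
          (β.coaction (z i)) ∈ βL.invariants) ∧
    ∃ φ : L →ₐ[k] L,
      (∀ r : L, φ r = (βL.coaction r).eval
        (-(algebraMap A L g * IsLocalization.Away.invSelf (S := L) h))) ∧
      (∀ i : Fin n, φ (algebraMap A L (z i)) =
        Polynomial.eval₂ (algebraMap A L)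
          (-(algebraMap A L g * IsLocalization.Away.invSelf (S := L) h))
          (β.coaction (z i))) ∧
      (∀ r : L, φ r ∈ βL.invariants) := by
  set u : L := IsLocalization.Away.invSelf (S := L) h with hu
  have hhu : algebraMap A L h * u = 1 := IsLocalization.Away.mul_invSelf h
  have hh : βL.coaction (algebraMap A L h) = C (algebraMap A L h) := by
    have h0 : β.coaction h = C h := hinv
    rw [hcompat, h0, map_C]
  have hCu : (C (algebraMap A L h) * C u : L[X]) = 1 := by rw [← C_mul, hhu, C_1]
  -- Inverses are unique, so the inverse of the invariant `h` is invariant.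
  have hcu : βL.coaction u = C u := by
    have h1 : C (algebraMap A L h) * βL.coaction u = 1 := by
      rw [← hh, ← map_mul, hhu, map_one]
    linear_combination C u * h1 - βL.coaction u * hCu
  have hs : βL.coaction (-(algebraMap A L g * u)) = C (-(algebraMap A L g * u)) - X := by
    rw [map_neg, map_mul, hcompat, hpair, hcu]
    simp only [Polynomial.map_add, Polynomial.map_mul, map_C, map_X, C_neg, C_mul]
    linear_combination -X * hCu
  have hz : ∀ i, (βL.coaction (algebraMap A L (z i))).eval (-(algebraMap A L g * u)) =
      eval₂ (algebraMap A L) (-(algebraMap A L g * u)) (β.coaction (z i)) := fun i => by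
    rw [hcompat, eval_map]
  have hφ : ∀ r : L, (((aeval (-(algebraMap A L g * u)) : L[X] →ₐ[L] L).restrictScalars k).comp
      βL.coaction) r = (βL.coaction r).eval (-(algebraMap A L g * u)) := fun r => by
    simp [coe_aeval_eq_eval]
  refine ⟨fun i => ?_, _, hφ, fun i => (hφ _).trans (hz i), fun r => ?_⟩
  · rw [← hz]
    exact βL.eval_coaction_mem_invariants hs _
  · rw [hφ]
    exact βL.eval_coaction_mem_invariants hs r
end

section
/- Let Spec(A) be a 𝔾_a-variety over k with action β, let z₁,…,z_n generate A as a k-algebra, write vᵢ(Z,t) = β^♯(zᵢ), let (g,h) be a principle pair, and set fᵢ(Z) = vᵢ(Z, −g/h). Then k[f₁(Z),…,f_n(Z)]_h = A_h^{𝔾_a}; that is, the homomorphism sending r(Z) ∈ A_h to r(f₁(Z),…,f_n(Z)) is surjective onto A_h^{𝔾_a}, and every r(Z) ∈ A_h^{𝔾_a} satisfies r(Z) = r(f₁(Z),…,f_n(Z)). -/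
/-!
Put `s = -g/h`. Since `(g, h)` is a principle pair, the coaction sends `s` to `s - t`. Consider the
`k`-algebra homomorphism `φ : r ↦ (βL^♯ r)(s)` from `A_h` to itself. By coassociativity, applying
the coaction to `φ r` replaces the parameter `s` by `t + (s - t) = s`, so `φ r` is invariant
(`GaAction.evalHom_mem_invariants`); and `φ` fixes every invariant, whose coaction is constant.
So `φ` is a retraction of `A_h` onto `A_h^{𝔾ₐ}`. As `φ (zᵢ) = fᵢ` and `φ` fixes `h` and `1/h`, its
image is generated by the `fᵢ`, `h` and `1/h`.
-/

open Polynomial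

/-- The homomorphism `r ↦ (β^♯ r)(s)`: move a function by the action, with the group parameter
specialised to the function `s`. -/
noncomputable def GaAction.evalHom {k B : Type*} [CommRing k] [CommRing B] [Algebra k B]
    (β : GaAction k B) (s : B) : B →ₐ[k] B :=
  ((Polynomial.aeval s : B[X] →ₐ[B] B).restrictScalars k).comp β.coaction

theorem GaAction.evalHom_apply {k B : Type*} [CommRing k] [CommRing B] [Algebra k B]
    (β : GaAction k B) (s r : B) : β.evalHom s r = (β.coaction r).eval s := by
  simp [GaAction.evalHom]

theorem GaAction.evalHom_eq_self {k B : Type*} [CommRing k] [CommRing B] [Algebra k B]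
    (β : GaAction k B) (s : B) {r : B} (hr : r ∈ β.invariants) : β.evalHom s r = r := by
  have hr' : β.coaction r = C r := hr
  rw [β.evalHom_apply, hr', eval_C]

/-- If `s` is moved to `s - t`, then specialising the group parameter to `s` produces
invariants. -/
theorem GaAction.evalHom_mem_invariants {k B : Type*} [CommRing k] [CommRing B] [Algebra k B]
    (β : GaAction k B) {s : B} (hs : β.coaction s = C s - X) (r : B) :
    β.evalHom s r ∈ β.invariants := by
  change β.coaction (β.evalHom s r) = C (β.evalHom s r)
  rw [β.evalHom_apply]
  have h1 : β.coaction ((β.coaction r).eval s) =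
      ((β.coaction r).map β.coaction.toRingHom).eval (C s - X) := by
    rw [eval_map, ← hs]
    exact hom_eval₂ (β.coaction r) (RingHom.id B) β.coaction.toRingHom s
  rw [h1, β.coassoc]
  have h2 := hom_eval₂ (β.coaction r) (C.comp C) (evalRingHom (C s - X : B[X])) (C X + X)
  have h3 : (evalRingHom (C s - X : B[X])).comp (C.comp C) = C := by
    ext x : 1
    simp
  have h4 : evalRingHom (C s - X : B[X]) (C X + X) = C s := by simp
  rw [h3, h4] at h2
  rw [← coe_evalRingHom, h2, eval₂_at_apply]

/-- A two-sided inverse of an invariant is invariant. -/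
theorem GaAction.mem_invariants_of_mul_eq_one {k B : Type*} [CommRing k] [CommRing B]
    [Algebra k B] (β : GaAction k B) {a b : B} (ha : a ∈ β.invariants) (hab : a * b = 1) :
    b ∈ β.invariants := by
  have ha' : β.coaction a = C a := ha
  change β.coaction b = C b
  have h1 : C a * β.coaction b = 1 := by rw [← ha', ← map_mul, hab, map_one]
  have h2 : C b * C a = (1 : B[X]) := by rw [← C_mul, mul_comm b a, hab, C_1]
  exact (left_inv_eq_right_inv h2 h1).symm

theorem statement5 (k A : Type) [Field k] [CommRing A] [Algebra k A]
    (β : GaAction k A) (n : ℕ) (z : Fin n → A)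
    (hgen : Algebra.adjoin k (Set.range z) = ⊤)
    (g h : A) (hinv : h ∈ β.invariants)
    (hpair : β.coaction g = Polynomial.C g + Polynomial.X * Polynomial.C h)
    (L : Type) [CommRing L] [Algebra k L] [Algebra A L] [IsScalarTower k A L]
    [IsLocalization.Away h L]
    (βL : GaAction k L)
    (hcompat : ∀ a : A, βL.coaction (algebraMap A L a) =
      (β.coaction a).map (algebraMap A L))
    -- the invariant rational functions fᵢ(Z) = vᵢ(Z, −g/h)
    (f : Fin n → L)
    (hf : ∀ i : Fin n, f i =
      Polynomial.eval₂ (algebraMap A L)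
        (-(algebraMap A L g * IsLocalization.Away.invSelf (S := L) h))
        (β.coaction (z i))) :
    -- k[f₁,…,fₙ]_h = A_h^{𝔾ₐ}
    Algebra.adjoin k
        (Set.range f ∪ {algebraMap A L h, IsLocalization.Away.invSelf (S := L) h}) =
      βL.invariants ∧
    -- the homomorphism r(Z) ↦ r(f₁(Z),…,fₙ(Z)) is surjective onto A_h^{𝔾ₐ} …
    (∀ u : L, u ∈ βL.invariants → ∃ q : L,
      (βL.coaction q).eval
        (-(algebraMap A L g * IsLocalization.Away.invSelf (S := L) h)) = u) ∧
    -- … and every invariant r(Z) satisfies r(Z) = r(f₁(Z),…,fₙ(Z))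
    (∀ r : L, r ∈ βL.invariants →
      (βL.coaction r).eval
        (-(algebraMap A L g * IsLocalization.Away.invSelf (S := L) h)) = r) := by
  set w : L := IsLocalization.Away.invSelf (S := L) h
  have hmul : algebraMap A L h * w = 1 := IsLocalization.Away.mul_invSelf h
  set s : L := -(algebraMap A L g * w) with hs
  have hhL : algebraMap A L h ∈ βL.invariants := by
    change βL.coaction _ = C _
    have hinv' : β.coaction h = C h := hinv
    rw [hcompat, hinv', map_C]
  have hwL : w ∈ βL.invariants := βL.mem_invariants_of_mul_eq_one hhL hmul
  have hsL : βL.coaction s = C s - X := by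
    have hw' : βL.coaction w = C w := hwL
    have h1 : (C (algebraMap A L h) * C w : L[X]) = 1 := by rw [← C_mul, hmul, C_1]
    rw [hs, map_neg, map_mul, hw', hcompat, hpair]
    simp only [Polynomial.map_add, Polynomial.map_mul, map_C, map_X, C_neg, C_mul]
    linear_combination (-X : L[X]) * h1
  have hfix : ∀ r ∈ βL.invariants, βL.evalHom s r = r := fun r hr => βL.evalHom_eq_self s hr
  have hfz : ∀ i, f i = βL.evalHom s (algebraMap A L (z i)) := fun i => by
    rw [hf, βL.evalHom_apply, hcompat, eval_map]
  refine ⟨le_antisymm ?_ ?_, fun u hu => ⟨u, ?_⟩, fun r hr => ?_⟩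
  · refine Algebra.adjoin_le ?_
    rintro x (⟨i, rfl⟩ | rfl | rfl)
    · rw [hfz]
      exact βL.evalHom_mem_invariants hsL _
    · exact hhL
    · exact hwL
  · intro r hr
    set S := Algebra.adjoin k (Set.range f ∪ {algebraMap A L h, w})
    have hA : ∀ a : A, βL.evalHom s (algebraMap A L a) ∈ S := by
      have hle : Algebra.adjoin k (Set.range z) ≤
          S.comap ((βL.evalHom s).comp (IsScalarTower.toAlgHom k A L)) := by
        refine Algebra.adjoin_le ?_
        rintro _ ⟨i, rfl⟩
        change βL.evalHom s (algebraMap A L (z i)) ∈ S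
        rw [← hfz]
        exact Algebra.subset_adjoin (Or.inl ⟨i, rfl⟩)
      intro a
      exact hle (hgen ▸ Algebra.mem_top : a ∈ Algebra.adjoin k (Set.range z))
    have hwS : w ∈ S := Algebra.subset_adjoin (Or.inr (Or.inr rfl))
    obtain ⟨m, a, ha⟩ := IsLocalization.Away.surj h r
    have hra : r = algebraMap A L a * w ^ m := by
      rw [← ha, mul_assoc, ← mul_pow, hmul, one_pow, mul_one]
    rw [← hfix r hr, hra, map_mul, map_pow, hfix w hwL]
    exact S.mul_mem (hA a) (S.pow_mem hwS m)
  · rw [← βL.evalHom_apply, hfix u hu]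
  · rw [← βL.evalHom_apply, hfix r hr]
end

section
/- Let β : 𝔾_a → GL(V) be an n-dimensional, non-trivial, quasi-principle linear representation of 𝔾_a over a field k, let {x₁,…,x_n} be a basis of V*, and let (g(X), h(X)) be a non-trivial principle pair with g(X), h(X) ∈ V*. Then after a change of basis one may assume h(X) = x₁ and g(X) = x₂, and the localized invariant ring k[X]^{𝔾_a}_{x₁} is isomorphic to the localization of a polynomial ring in n−1 variables at one of the indeterminates; explicitly, k[X]^{𝔾_a}_{x₁} = k[x₁, r₃(X),…,r_n(X)]_{x₁} where rᵢ(X) are invariant polynomials not divisible by x₁, and x₁, r₃(X),…,r_n(X) are algebraically independent over k. -/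
/-!
STATEMENT 6: Let `β : 𝔾ₐ → GL(V)` be an `n`-dimensional, non-trivial, quasi-principle linear
representation of `𝔾ₐ` over a field `k`, let `{x₁,…,xₙ}` be a basis of `V*`, and let
`(g(X), h(X))` be a non-trivial principle pair with `g(X), h(X) ∈ V*`.  Then after a change
of basis one may assume `h(X) = x₁` and `g(X) = x₂`, and the localized invariant ring
`k[X]^{𝔾ₐ}_{x₁}` is isomorphic to the localization of a polynomial ring in `n−1` variables at
one of the indeterminates: explicitly, `k[X]^{𝔾ₐ}_{x₁} = k[x₁, r₃(X),…,rₙ(X)]_{x₁}`, where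
the `rᵢ(X)` are invariant polynomials not divisible by `x₁` (namely `rᵢ(X)/x₁^{dᵢ} = fᵢ(X) :=
β^♯(xᵢ)|_{t=−x₂/x₁}`) and `x₁, r₃(X),…,rₙ(X)` are algebraically independent over `k`.

We write the dimension as `n = m + 2` (the existence of a non-trivial pair of linearly
independent linear forms forces `n ≥ 2`).  The change of basis is a degree-one `k`-algebra
automorphism `ψ` of `k[X] = S_k(V*)` carrying `β` to a representation `β'` with `ψ(h) = x₁`
and `ψ(g) = x₂`; "non-trivial principle pair" means `h ≠ 0` and `β^♯(g) = g + t·h` with `h`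
invariant (since `b(t) = t` is separable, quasi-principality of the pair amounts to its
non-triviality).  The localization `k[X]_{x₁}` is an `IsLocalization.Away x₁` model `L`, and
`k[X]^{𝔾ₐ}_{x₁}` is the subalgebra of `L` generated by the image of `k[X]^{𝔾ₐ}` together with
`1/x₁`.
-/
open Polynomial

/-!
The pair `(g, h)` provides a slice for the action after inverting `h`. The forms `g` and `h` are
linearly independent: `g = c h` would be invariant, while `β^♯(g) = g + t h` with `h ≠ 0`. So a
linear change of variables (`exists_linear_change`) moves them to `x₂` and `x₁`, and the action is
carried along (`GaAction.transport`).

Now let `s = -x₂ / x₁` in `k[X]_{x₁}`. The co-action extends to `k[X]_{x₁}` and sends `s` to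
`s - t` (`GaAction.awayCoaction_slice`). Consider the algebra map `Φ(a) = β^♯(a)|_{t = s}`
(`GaAction.substHom`). By co-associativity, `Φ(a)` is fixed by the extended co-action
(`GaAction.awayCoaction_substHom`), and `Φ(a) = a` when `a` is invariant. Hence the localized
invariant ring is generated by `x₁`, `1 / x₁` and the `Φ(xᵢ)`, where `Φ(x₁) = x₁` and
`Φ(x₂) = 0`. Each remaining `Φ(xᵢ)` is nonzero, so it is a power of `x₁` (of positive, zero or
negative exponent) times a polynomial `rᵢ` not divisible by `x₁`, and this `rᵢ` is invariant.

Both `Φ(xᵢ) ≠ 0` and algebraic independence come from one remark: a `k`-algebra map `τ` out of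
`k[X]_{x₁}` with `τ(x₂) = 0` kills `s`, and therefore `τ(Φ(a)) = τ(a)`
(`GaAction.map_substHom_of_map_eq_zero`). Taking `τ` to fix `x₁` and to rescale each `xᵢ` by the
inverse of the power of `x₁` that turns `Φ(xᵢ)` into `rᵢ` gives `τ(x₁) = x₁` and `τ(rᵢ) = xᵢ`,
which are algebraically independent.
-/

/-! ### Linear changes of variables -/

/-- Over a field, two linearly independent finite families with the same index set are exchanged
by an automorphism of the ambient space. -/
theorem exists_linearEquiv_apply_eq {K V ι : Type*} [Field K] [AddCommGroup V] [Module K V]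
    [Finite ι] {v w : ι → V} (hv : LinearIndependent K v) (hw : LinearIndependent K w) :
    ∃ e : V ≃ₗ[K] V, ∀ i, e (v i) = w i := by
  have : FiniteDimensional K (Submodule.span K (Set.range v)) :=
    FiniteDimensional.span_of_finite K (Set.finite_range _)
  obtain ⟨e, he⟩ := Submodule.exists_linearEquiv_restrict_eq
    (hv.linearCombinationEquiv.symm ≪≫ₗ hw.linearCombinationEquiv)
  refine ⟨e, fun i => ?_⟩
  have h1 : hv.linearCombinationEquiv (Finsupp.single i 1) = v i := by simp
  rw [← h1, ← he]
  simp

/-- The linear form `∑ i, c i • X i` with coefficient vector `c`. -/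
noncomputable def linearForm (k σ : Type*) [CommSemiring k] [Fintype σ] :
    (σ → k) →ₗ[k] MvPolynomial σ k :=
  Fintype.linearCombination k MvPolynomial.X

theorem linearForm_single {k σ : Type*} [CommSemiring k] [Fintype σ] [DecidableEq σ] (i : σ) :
    linearForm k σ (Pi.single i 1) = MvPolynomial.X i := by
  simp [linearForm, Fintype.linearCombination_apply_single]

theorem range_linearForm (k σ : Type*) [CommSemiring k] [Fintype σ] :
    LinearMap.range (linearForm k σ) = MvPolynomial.homogeneousSubmodule σ k 1 := by
  rw [MvPolynomial.homogeneousSubmodule_one_eq_span_X, linearForm, Fintype.range_linearCombination]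

theorem isHomogeneous_linearForm {k σ : Type*} [CommSemiring k] [Fintype σ] (c : σ → k) :
    (linearForm k σ c).IsHomogeneous 1 := by
  have : linearForm k σ c ∈ LinearMap.range (linearForm k σ) := ⟨c, rfl⟩
  rwa [range_linearForm] at this

theorem aeval_linearForm {k σ : Type*} [CommSemiring k] [Fintype σ] [DecidableEq σ]
    (e : (σ → k) →ₗ[k] (σ → k)) (c : σ → k) :
    MvPolynomial.aeval (fun i => linearForm k σ (e (Pi.single i 1))) (linearForm k σ c) =
      linearForm k σ (e c) := by
  have : (MvPolynomial.aeval (fun i => linearForm k σ (e (Pi.single i 1)))).toLinearMap ∘ₗ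
      linearForm k σ = linearForm k σ ∘ₗ e := by
    refine LinearMap.pi_ext' fun i => LinearMap.ext_ring ?_
    simp [linearForm_single]
  exact LinearMap.congr_fun this c

/-- The automorphism of `k[X]` that acts on linear forms through a linear automorphism of the
space of coefficient vectors. -/
noncomputable def linearSubst {k σ : Type*} [CommSemiring k] [Fintype σ] [DecidableEq σ]
    (e : (σ → k) ≃ₗ[k] (σ → k)) : MvPolynomial σ k ≃ₐ[k] MvPolynomial σ k :=
  AlgEquiv.ofAlgHom
    (MvPolynomial.aeval fun i => linearForm k σ (e.toLinearMap (Pi.single i 1)))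
    (MvPolynomial.aeval fun i => linearForm k σ (e.symm.toLinearMap (Pi.single i 1)))
    (MvPolynomial.algHom_ext fun i => by
      rw [AlgHom.comp_apply, MvPolynomial.aeval_X, aeval_linearForm]
      simp [linearForm_single])
    (MvPolynomial.algHom_ext fun i => by
      rw [AlgHom.comp_apply, MvPolynomial.aeval_X, aeval_linearForm]
      simp [linearForm_single])

theorem linearSubst_linearForm {k σ : Type*} [CommSemiring k] [Fintype σ] [DecidableEq σ]
    (e : (σ → k) ≃ₗ[k] (σ → k)) (c : σ → k) :
    linearSubst e (linearForm k σ c) = linearForm k σ (e c) :=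
  aeval_linearForm e.toLinearMap c

/-- A family of linearly independent linear forms can be made part of the coordinates by a linear
change of variables. -/
theorem exists_linear_change {k σ ι : Type*} [Field k] [Fintype σ] [DecidableEq σ] [Finite ι]
    (f : ι → MvPolynomial σ k) (hf : ∀ i, (f i).IsHomogeneous 1) (hli : LinearIndependent k f)
    (j : ι → σ) (hj : Function.Injective j) :
    ∃ ψ : MvPolynomial σ k ≃ₐ[k] MvPolynomial σ k,
      (∀ i, (ψ (MvPolynomial.X i)).IsHomogeneous 1) ∧ ∀ i, ψ (f i) = MvPolynomial.X (j i) := by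
  have hex : ∀ i, ∃ c, linearForm k σ c = f i := fun i => by
    have : f i ∈ LinearMap.range (linearForm k σ) := by rw [range_linearForm]; exact hf i
    exact this
  choose c hc using hex
  have hcli : LinearIndependent k c := by
    refine LinearIndependent.of_comp (linearForm k σ) ?_
    rwa [show linearForm k σ ∘ c = f from funext hc]
  have hsli : LinearIndependent k fun i => (Pi.single (j i) 1 : σ → k) := by
    have := (Pi.basisFun k σ).linearIndependent.comp j hj
    convert this using 2 with i
    simp
  obtain ⟨e, he⟩ := exists_linearEquiv_apply_eq hcli hsli
  refine ⟨linearSubst e, fun i => ?_, fun i => ?_⟩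
  · rw [← linearForm_single, linearSubst_linearForm]
    exact isHomogeneous_linearForm _
  · rw [← hc, linearSubst_linearForm, he, linearForm_single]

namespace GaAction

/-! ### Transport of an action -/

section Transport

variable {k A B : Type*} [CommRing k] [CommRing A] [Algebra k A] [CommRing B] [Algebra k B]

/-- Transport of a `𝔾ₐ`-action along an isomorphism of algebras. -/
noncomputable def transport (β : GaAction k A) (ψ : A ≃ₐ[k] B) : GaAction k B where
  coaction := (Polynomial.mapAlgHom (ψ : A →ₐ[k] B)).comp
    (β.coaction.comp (ψ.symm : B →ₐ[k] A))
  counit b := by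
    have h : ((β.coaction (ψ.symm b)).map (ψ : A →+* B)).eval 0 = b := by
      rw [Polynomial.eval_zero_map, β.counit]
      exact ψ.apply_symm_apply b
    exact h
  coassoc b := by
    obtain ⟨a, rfl⟩ := ψ.surjective b
    have h := congrArg (Polynomial.map (Polynomial.mapRingHom (ψ : A →+* B))) (β.coassoc a)
    have hψ : (ψ.symm : B →ₐ[k] A) (ψ a) = a := ψ.symm_apply_apply a
    rw [AlgHom.comp_apply, AlgHom.comp_apply, hψ]
    simp only [Polynomial.coe_mapAlgHom, Polynomial.map_map] at h ⊢
    convert h using 1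
    · congr 1
      ext b : 1
      simp
    · rw [Polynomial.eval₂_map, ← Polynomial.coe_mapRingHom, Polynomial.hom_eval₂]
      congr 1
      · ext b : 1
        simp
      · simp

theorem transport_coaction (β : GaAction k A) (ψ : A ≃ₐ[k] B) (a : A) :
    (β.transport ψ).coaction (ψ a) = (β.coaction a).map (ψ : A →+* B) := by
  simp [transport]

end Transport

/-! ### Localization at an invariant -/

section Slice

variable {k A : Type*} [CommRing k] [CommRing A] [Algebra k A] (β : GaAction k A)
  {L : Type*} [CommRing L] [Algebra A L]

theorem mem_invariants {β : GaAction k A} {a : A} :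
    a ∈ β.invariants ↔ β.coaction a = Polynomial.C a := Iff.rfl

variable (L) in
/-- The co-action extended to a localization `L = A_x` at an invariant element `x`. -/
noncomputable def awayCoaction (x : A) [IsLocalization.Away x L] (hx : x ∈ β.invariants) :
    L →+* L[X] :=
  IsLocalization.Away.lift x
    (g := (Polynomial.mapRingHom (algebraMap A L)).comp (β.coaction : A →+* A[X])) (by
      simp only [RingHom.comp_apply, RingHom.coe_coe, mem_invariants.1 hx,
        Polynomial.coe_mapRingHom, Polynomial.map_C]
      exact (IsLocalization.Away.algebraMap_isUnit x).map Polynomial.C)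

theorem awayCoaction_algebraMap (x : A) [IsLocalization.Away x L] (hx : x ∈ β.invariants) (a : A) :
    β.awayCoaction L x hx (algebraMap A L a) = (β.coaction a).map (algebraMap A L) := by
  simp [awayCoaction]

/-- For a principle pair `(y, x)`, the point `s = -y / x` of `A_x` transforms as `s ↦ s - t`. -/
theorem awayCoaction_slice {x y : A} [IsLocalization.Away x L] (hx : x ∈ β.invariants)
    (hy : β.coaction y = Polynomial.C y + Polynomial.X * Polynomial.C x) :
    β.awayCoaction L x hx (-(algebraMap A L y * IsLocalization.Away.invSelf x)) =
      Polynomial.C (-(algebraMap A L y * IsLocalization.Away.invSelf x)) - Polynomial.X := by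
  have hu : IsUnit (Polynomial.C (algebraMap A L x)) :=
    (IsLocalization.Away.algebraMap_isUnit x).map Polynomial.C
  have hinv : algebraMap A L x * IsLocalization.Away.invSelf x = 1 :=
    IsLocalization.Away.mul_invSelf x
  have h1 : β.awayCoaction L x hx (algebraMap A L x) = Polynomial.C (algebraMap A L x) := by
    rw [awayCoaction_algebraMap, mem_invariants.1 hx, Polynomial.map_C]
  have h2 := congrArg (β.awayCoaction L x hx) hinv
  rw [map_mul, h1, map_one] at h2
  have h3 : Polynomial.C (algebraMap A L x) *
      Polynomial.C (IsLocalization.Away.invSelf x : L) = 1 := by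
    rw [← map_mul, hinv, map_one]
  apply hu.mul_left_cancel
  rw [map_neg, map_mul, awayCoaction_algebraMap, hy]
  simp only [Polynomial.map_add, Polynomial.map_mul, Polynomial.map_C, Polynomial.map_X,
    map_neg, map_mul]
  linear_combination (-(Polynomial.C (algebraMap A L y) +
    Polynomial.X * Polynomial.C (algebraMap A L x))) * h2 + Polynomial.C (algebraMap A L y) * h3

/-- An element of `A` whose image in `L = A_x` is fixed by the extended co-action is invariant. -/
theorem mem_invariants_of_awayCoaction (x : A) [IsLocalization.Away x L] (hx : x ∈ β.invariants)
    (hinj : Function.Injective (algebraMap A L)) {a : A}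
    (ha : β.awayCoaction L x hx (algebraMap A L a) = Polynomial.C (algebraMap A L a)) :
    a ∈ β.invariants := by
  rw [awayCoaction_algebraMap, ← Polynomial.map_C] at ha
  exact Polynomial.map_injective _ hinj ha

/-! ### Substituting a slice in the co-action -/

variable [Algebra k L] [IsScalarTower k A L]

/-- The substitution `a ↦ β^♯(a)|_{t = s}` for a point `s` of an `A`-algebra `L`. -/
noncomputable def substHom (s : L) : A →ₐ[k] L :=
  ((Polynomial.aeval s : A[X] →ₐ[A] L).restrictScalars k).comp β.coaction

theorem substHom_apply (s : L) (a : A) :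
    β.substHom s a = (β.coaction a).eval₂ (algebraMap A L) s := rfl

theorem substHom_of_mem_invariants (s : L) {a : A} (ha : a ∈ β.invariants) :
    β.substHom s a = algebraMap A L a := by
  rw [substHom_apply, mem_invariants.1 ha, Polynomial.eval₂_C]

/-- A ring homomorphism out of `L` killing `s` does not distinguish `β^♯(a)|_{t = s}` from `a`:
at `t = 0` the co-action is the identity. -/
theorem map_substHom_of_map_eq_zero {R : Type*} [CommRing R] (τ : L →+* R) {s : L} (hs : τ s = 0)
    (a : A) : τ (β.substHom s a) = τ (algebraMap A L a) := by
  rw [substHom_apply, Polynomial.hom_eval₂, hs, Polynomial.eval₂_at_zero, RingHom.comp_apply,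
    Polynomial.coeff_zero_eq_eval_zero, β.counit]

/-- If `s` transforms as `s ↦ s - t`, then substituting `t = s` in the co-action yields invariants:
`β^♯(a)` at `t + (s - t)` is `β^♯(a)` at `s`. -/
theorem awayCoaction_substHom (x : A) [IsLocalization.Away x L] (hx : x ∈ β.invariants) {s : L}
    (hs : β.awayCoaction L x hx s = Polynomial.C s - Polynomial.X) (a : A) :
    β.awayCoaction L x hx (β.substHom s a) = Polynomial.C (β.substHom s a) := by
  have h := congrArg (Polynomial.eval₂ (Polynomial.mapRingHom (algebraMap A L))
    (Polynomial.C s - Polynomial.X)) (β.coassoc a)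
  rw [Polynomial.eval₂_map] at h
  rw [substHom_apply, Polynomial.hom_eval₂, hs]
  trans ((β.coaction a).eval₂ ((Polynomial.mapRingHom (algebraMap A L)).comp
    β.coaction.toRingHom) (Polynomial.C s - Polynomial.X))
  · congr 1
    ext b : 1
    simp [awayCoaction_algebraMap]
  · rw [h, ← Polynomial.coe_eval₂RingHom, Polynomial.hom_eval₂, Polynomial.hom_eval₂]
    congr 1
    · ext b : 1
      simp
    · simp

end Slice

end GaAction

/-! ### The localized invariant ring -/

/-- Every nonzero element `z` of `A_x` has a numerator `r : A` not divisible by `x`, that is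
`z = x ^ (M - N) * r`. The exponent `M - N` can have either sign, hence the two powers of `x`. -/
theorem exists_not_dvd_numerator {A L : Type*} [CommRing A] [IsDomain A] [WfDvdMonoid A]
    [CommRing L] [Algebra A L] (x : A) (hx : ¬ IsUnit x) [IsLocalization.Away x L]
    {z : L} (hz : z ≠ 0) :
    ∃ (r : A) (M N : ℕ), ¬ x ∣ r ∧ z * algebraMap A L x ^ N =
      algebraMap A L x ^ M * algebraMap A L r := by
  obtain ⟨N, a, ha⟩ := IsLocalization.Away.surj x z
  have ha0 : a ≠ 0 := by
    rintro rfl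
    rw [map_zero] at ha
    exact hz ((IsLocalization.Away.algebraMap_pow_isUnit x N).mul_left_eq_zero.1 ha)
  obtain ⟨M, r, hr, rfl⟩ := WfDvdMonoid.max_power_factor' ha0 hx
  exact ⟨r, M, N, hr, by rw [ha, map_mul, map_pow]⟩

/-- The structure of the localized invariant ring when the pair `(g, h)` is `(X 1, X 0)`. -/
theorem GaAction.exists_invariants_of_pair {k : Type*} [Field k] {m : ℕ}
    (β : GaAction k (MvPolynomial (Fin (m + 2)) k))
    (hx : MvPolynomial.X 0 ∈ β.invariants)
    (hy : β.coaction (MvPolynomial.X 1) =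
      Polynomial.C (MvPolynomial.X 1) + Polynomial.X * Polynomial.C (MvPolynomial.X 0))
    (L : Type*) [CommRing L] [Algebra k L] [Algebra (MvPolynomial (Fin (m + 2)) k) L]
    [IsScalarTower k (MvPolynomial (Fin (m + 2)) k) L]
    [IsLocalization.Away (MvPolynomial.X 0 : MvPolynomial (Fin (m + 2)) k) L] :
    ∃ r : Fin m → MvPolynomial (Fin (m + 2)) k,
      (∀ i, r i ∈ β.invariants) ∧
      (∀ i, ¬ MvPolynomial.X 0 ∣ r i) ∧
      AlgebraicIndependent k (Fin.cons (MvPolynomial.X 0) r :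
        Fin (m + 1) → MvPolynomial (Fin (m + 2)) k) ∧
      Algebra.adjoin k
          ((algebraMap (MvPolynomial (Fin (m + 2)) k) L '' (β.invariants : Set _)) ∪
            {IsLocalization.Away.invSelf (S := L)
              (MvPolynomial.X 0 : MvPolynomial (Fin (m + 2)) k)}) =
        Algebra.adjoin k
          (insert (algebraMap (MvPolynomial (Fin (m + 2)) k) L (MvPolynomial.X 0))
            (insert
              (IsLocalization.Away.invSelf (S := L)
                (MvPolynomial.X 0 : MvPolynomial (Fin (m + 2)) k))
              (Set.range fun i =>
                algebraMap (MvPolynomial (Fin (m + 2)) k) L (r i)))) := by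
  set x : MvPolynomial (Fin (m + 2)) k := MvPolynomial.X 0 with hxdef
  set ι : MvPolynomial (Fin (m + 2)) k →+* L := algebraMap _ L with hι
  set u : L := IsLocalization.Away.invSelf x with hu
  have hxu : ι x * u = 1 := IsLocalization.Away.mul_invSelf x
  have hx0 : x ≠ 0 := MvPolynomial.X_ne_zero _
  have hinj : Function.Injective ι := IsLocalization.injective (M := Submonoid.powers x) L
    (powers_le_nonZeroDivisors_of_noZeroDivisors hx0)
  have hxunit : ¬ IsUnit x := MvPolynomial.X_prime.not_isUnit
  set s : L := -(ι (MvPolynomial.X 1) * u) with hs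
  have hsinv : β.awayCoaction L x hx s = Polynomial.C s - Polynomial.X :=
    β.awayCoaction_slice (L := L) hx hy
  let j : Fin m → Fin (m + 2) := fun i => i.succ.succ
  have hj0 : ∀ i, j i ≠ 0 := fun i => Fin.succ_ne_zero _
  have hj1 : ∀ i, j i ≠ 1 := fun i h => Fin.succ_ne_zero i (Fin.succ_injective _ h)
  -- Any `k`-algebra map `A → L` fixing `x` and killing `X 1` extends to `L`, and then kills `s`.
  have hext : ∀ τ : MvPolynomial (Fin (m + 2)) k →ₐ[k] L, τ x = ι x → τ (MvPolynomial.X 1) = 0 →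
      ∃ τ' : L →ₐ[k] L, (∀ a, τ' (ι a) = τ a) ∧ ∀ a, τ' (β.substHom s a) = τ a := by
    intro τ hτx hτy
    have hτu : IsUnit (τ x) := by rw [hτx]; exact IsLocalization.Away.algebraMap_isUnit x
    let τ' : L →ₐ[k] L := IsLocalization.Away.liftAlgHom x hτu
    have h1 : ∀ a, τ' (ι a) = τ a := fun a => IsLocalization.Away.lift_eq x hτu a
    refine ⟨τ', h1, fun a => ?_⟩
    rw [← h1]
    refine β.map_substHom_of_map_eq_zero (τ' : L →+* L) ?_ a
    simp [hs, h1, hτy]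
  -- Specializing `X 1` to `0` shows that the elements `β^♯(xᵢ)|_{t = s}` are nonzero.
  have hne : ∀ i, β.substHom s (MvPolynomial.X (j i)) ≠ 0 := by
    intro i h0
    obtain ⟨τ', -, h2⟩ := hext (MvPolynomial.aeval
      fun l => if l = 1 then 0 else ι (MvPolynomial.X l)) (by simp [hxdef]) (by simp)
    have := h2 (MvPolynomial.X (j i))
    rw [h0, map_zero, MvPolynomial.aeval_X, if_neg (hj1 i), ← map_zero ι] at this
    exact MvPolynomial.X_ne_zero _ (hinj this).symm
  choose r M N hrx hr using fun i => exists_not_dvd_numerator x hxunit (hne i)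
  have hunit : ∀ n, ι x ^ n * u ^ n = 1 := fun n => by rw [← mul_pow, hxu, one_pow]
  have hr' : ∀ i, ι (r i) = β.substHom s (MvPolynomial.X (j i)) * (ι x ^ N i * u ^ M i) :=
    fun i => by linear_combination (-(u ^ M i)) * hr i - ι (r i) * hunit (M i)
  have hr'' : ∀ i, β.substHom s (MvPolynomial.X (j i)) = ι (r i) * (ι x ^ M i * u ^ N i) :=
    fun i => by
      linear_combination u ^ N i * hr i - β.substHom s (MvPolynomial.X (j i)) * hunit (N i)
  have hrinv : ∀ i, r i ∈ β.invariants := by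
    intro i
    refine β.mem_invariants_of_awayCoaction x hx hinj ?_
    have hxx : β.awayCoaction L x hx (ι x) = Polynomial.C (ι x) := by
      rw [β.awayCoaction_algebraMap, GaAction.mem_invariants.1 hx, Polynomial.map_C]
    have h : β.awayCoaction L x hx (ι x ^ M i * ι (r i)) = Polynomial.C (ι x ^ M i * ι (r i)) := by
      rw [← hr i, map_mul, map_pow, hxx, β.awayCoaction_substHom x hx hsinv, Polynomial.C_mul,
        Polynomial.C_pow]
    rw [map_mul, map_pow, hxx, Polynomial.C_mul, Polynomial.C_pow] at h
    exact (((IsLocalization.Away.algebraMap_isUnit x).map Polynomial.C).pow (M i)).mul_left_cancel h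
  refine ⟨r, hrinv, hrx, ?_, le_antisymm ?_ ?_⟩
  · -- With `X 1 ↦ 0` and `xᵢ` rescaled by the right power of `x`, the image of `rᵢ` becomes `xᵢ`.
    obtain ⟨τ', h1, h2⟩ := hext (MvPolynomial.aeval
      (Fin.cons (ι x) (Fin.cons 0 fun i => ι (MvPolynomial.X (j i)) * (ι x ^ M i * u ^ N i))))
      (by simp [hxdef]) (by
        rw [MvPolynomial.aeval_X]
        rfl)
    have hτx : τ' (ι x) = ι x := by rw [h1]; simp [hxdef]
    have hτu : τ' u = u := by
      have h := congrArg τ' hxu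
      rw [map_mul, hτx, map_one] at h
      linear_combination u * h - τ' u * hxu
    have hτr : ∀ i, τ' (ι (r i)) = ι (MvPolynomial.X (j i)) := by
      intro i
      rw [hr', map_mul, h2, map_mul, map_pow, map_pow, hτx, hτu, MvPolynomial.aeval_X]
      simp only [j, Fin.cons_succ]
      linear_combination ι (MvPolynomial.X i.succ.succ) *
        (ι x ^ N i * u ^ N i * hunit (M i) + hunit (N i))
    refine AlgebraicIndependent.of_comp (τ'.comp (IsScalarTower.toAlgHom k (MvPolynomial (Fin (m + 2)) k) L)) ?_
    have hXi : AlgebraicIndependent k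
        (fun l : Fin (m + 1) => ι (MvPolynomial.X ((Fin.cons 0 j : Fin (m + 1) → Fin (m + 2)) l))) := by
      refine ((MvPolynomial.algebraicIndependent_X (Fin (m + 2)) k).comp
        (Fin.cons 0 j : Fin (m + 1) → Fin (m + 2)) ?_).map' (f := IsScalarTower.toAlgHom k (MvPolynomial (Fin (m + 2)) k) L) hinj
      refine Fin.cons_injective_iff.2 ⟨?_, ?_⟩
      · rintro ⟨i, hi⟩
        exact hj0 i hi
      · exact (Fin.succ_injective _).comp (Fin.succ_injective _)
    convert hXi using 1
    funext l
    refine Fin.cases ?_ (fun i => ?_) l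
    · simpa using hτx
    · simpa using hτr i
  · refine Algebra.adjoin_le ?_
    set S := Algebra.adjoin k (insert (ι x) (insert u (Set.range fun i => ι (r i)))) with hS
    have hxS : ι x ∈ S := Algebra.subset_adjoin (Set.mem_insert _ _)
    have huS : u ∈ S := Algebra.subset_adjoin (Set.mem_insert_of_mem _ (Set.mem_insert _ _))
    have hrS : ∀ i, ι (r i) ∈ S := fun i => Algebra.subset_adjoin
      (Set.mem_insert_of_mem _ (Set.mem_insert_of_mem _ ⟨i, rfl⟩))
    have hXS : ∀ l, β.substHom s (MvPolynomial.X l) ∈ S := by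
      intro l
      refine Fin.cases ?_ (Fin.cases ?_ fun i => ?_) l
      · rw [β.substHom_of_mem_invariants s hx]
        exact hxS
      · -- `x₂ + t x₁` vanishes at `t = -x₂ / x₁`.
        have : β.substHom s (MvPolynomial.X 1) = 0 := by
          rw [β.substHom_apply, hy]
          simp only [Polynomial.eval₂_add, Polynomial.eval₂_mul, Polynomial.eval₂_C,
            Polynomial.eval₂_X]
          linear_combination (-ι (MvPolynomial.X 1)) * hxu
        rw [show (Fin.succ 0 : Fin (m + 2)) = 1 from rfl, this]
        exact S.zero_mem
      · rw [hr'' i]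
        exact S.mul_mem (hrS i) (S.mul_mem (S.pow_mem hxS _) (S.pow_mem huS _))
    have hall : ∀ a, β.substHom s a ∈ S := by
      intro a
      have hle : (Algebra.adjoin k (Set.range MvPolynomial.X)).map (β.substHom s) ≤ S := by
        rw [AlgHom.map_adjoin]
        refine Algebra.adjoin_le ?_
        rintro _ ⟨_, ⟨l, rfl⟩, rfl⟩
        exact hXS l
      rw [MvPolynomial.adjoin_range_X] at hle
      exact hle ⟨a, trivial, rfl⟩
    rintro _ (⟨a, ha, rfl⟩ | rfl)
    · rw [← β.substHom_of_mem_invariants s ha]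
      exact hall a
    · exact huS
  · refine Algebra.adjoin_mono ?_
    rintro _ (rfl | rfl | ⟨i, rfl⟩)
    · exact Or.inl ⟨x, hx, rfl⟩
    · exact Or.inr rfl
    · exact Or.inl ⟨r i, hrinv i, rfl⟩

theorem statement6 (k : Type) [Field k] (m : ℕ)
    (β : GaAction k (MvPolynomial (Fin (m + 2)) k))
    -- β is a linear representation
    (hlin : ∀ i : Fin (m + 2), ∀ d : ℕ,
      ((β.coaction (MvPolynomial.X i)).coeff d).IsHomogeneous 1)
    -- β is non-trivial
    (hnontriv : ∃ a, β.coaction a ≠ Polynomial.C a)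
    -- (g, h) is a non-trivial (hence quasi-principle) principle pair of linear forms
    (g h : MvPolynomial (Fin (m + 2)) k)
    (hg1 : g.IsHomogeneous 1) (hh1 : h.IsHomogeneous 1) (hh0 : h ≠ 0)
    (hinv : h ∈ β.invariants)
    (hpair : β.coaction g = Polynomial.C g + Polynomial.X * Polynomial.C h)
    -- the localization k[X]_{x₁}
    (L : Type) [CommRing L] [Algebra k L] [Algebra (MvPolynomial (Fin (m + 2)) k) L]
    [IsScalarTower k (MvPolynomial (Fin (m + 2)) k) L]
    [IsLocalization.Away (MvPolynomial.X 0 : MvPolynomial (Fin (m + 2)) k) L] :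
    -- after a change of basis we may assume h = x₁ and g = x₂ …
    ∃ (ψ : MvPolynomial (Fin (m + 2)) k ≃ₐ[k] MvPolynomial (Fin (m + 2)) k)
      (β' : GaAction k (MvPolynomial (Fin (m + 2)) k)),
      (∀ i : Fin (m + 2), (ψ (MvPolynomial.X i)).IsHomogeneous 1) ∧
      (∀ a, β'.coaction (ψ a) =
        (β.coaction a).map (↑ψ : MvPolynomial (Fin (m + 2)) k →+* _)) ∧
      ψ h = MvPolynomial.X 0 ∧ ψ g = MvPolynomial.X 1 ∧
      -- … and k[X]^{𝔾ₐ}_{x₁} = k[x₁, r₃,…,rₙ]_{x₁} with x₁, r₃,…,rₙ algebraically independent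
      ∃ r : Fin m → MvPolynomial (Fin (m + 2)) k,
        (∀ i, r i ∈ β'.invariants) ∧
        (∀ i, ¬ MvPolynomial.X 0 ∣ r i) ∧
        AlgebraicIndependent k (Fin.cons (MvPolynomial.X 0) r :
          Fin (m + 1) → MvPolynomial (Fin (m + 2)) k) ∧
        Algebra.adjoin k
            ((algebraMap (MvPolynomial (Fin (m + 2)) k) L '' (β'.invariants : Set _)) ∪
              {IsLocalization.Away.invSelf (S := L) (MvPolynomial.X 0 : MvPolynomial (Fin (m + 2)) k)}) =
          Algebra.adjoin k
            (insert (algebraMap (MvPolynomial (Fin (m + 2)) k) L (MvPolynomial.X 0))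
              (insert
                (IsLocalization.Away.invSelf (S := L) (MvPolynomial.X 0 : MvPolynomial (Fin (m + 2)) k))
                (Set.range fun i =>
                  algebraMap (MvPolynomial (Fin (m + 2)) k) L (r i)))) := by
  -- If `g = c • h` then `g` is invariant, contradicting `β^♯(g) = g + t h` with `h ≠ 0`.
  have hli : LinearIndependent k ![h, g] := by
    refine (LinearIndependent.pair_iff' hh0).2 fun c hc => hh0 ?_
    rw [← hc, map_smul, GaAction.mem_invariants.1 hinv, ← Polynomial.smul_C] at hpair
    have := congrArg (fun p => Polynomial.coeff p 1) hpair
    simpa [Polynomial.coeff_C] using this.symm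
  obtain ⟨ψ, hψ, hψf⟩ := exists_linear_change ![h, g]
    (by intro i; fin_cases i <;> assumption) hli ![(0 : Fin (m + 2)), 1]
    (by
      refine fun a b hab => ?_
      fin_cases a <;> fin_cases b <;> simp_all)
  have hψh : ψ h = MvPolynomial.X 0 := hψf 0
  have hψg : ψ g = MvPolynomial.X 1 := hψf 1
  refine ⟨ψ, β.transport ψ, hψ, β.transport_coaction ψ, hψh, hψg, ?_⟩
  refine (β.transport ψ).exists_invariants_of_pair ?_ ?_ L
  · rw [GaAction.mem_invariants, ← hψh, β.transport_coaction, GaAction.mem_invariants.1 hinv,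
      Polynomial.map_C]
    rfl
  · rw [← hψg, ← hψh, β.transport_coaction, hpair]
    simp
end

section
/- Let X_Σ be a normal toric variety over a field k of arbitrary characteristic associated to a fan Σ in N_ℝ. Then X_Σ is complete if and only if the support |Σ| = ∪_{σ ∈ Σ} σ is equal to all of N_ℝ. -/
/-!
By the valuative criterion, `X_Σ` is proper over `k` if and only if every point of `X_Σ` over the
fraction field `K` of a valuation ring `R` (compatibly with an `R`-point of `Spec k`) extends
uniquely to `R`; finite type holds because the monoids `σ^∨ ∩ M` are finitely generated
(`dualMonoid_fg`).

If `X_Σ` is proper and the support is not all of `N_ℝ`, there is a lattice point `u` outside it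
(`exists_int_notMem_support`). The `k((x))`-point `χ^m ↦ x^⟨m,u⟩` of the torus then extends to a
`k⟦x⟧`-point of some chart `U_σ`, which means `⟨m,u⟩ ≥ 0` for all `m ∈ σ^∨ ∩ M`, that is, `u ∈ σ`
(`ToricModel.support_of_isProper`).

Conversely, suppose that the cones cover `N_ℝ`. A `K`-point lies in the closed orbit of the chart
of some cone `τ` (`ToricModel.exists_orbit_chart`). The characters in `τ^⊥` with nonintegral value
form an additively closed set not containing `0`. Covering implies that some cone `σ ⊇ τ` has no
such character in `σ^∨` (`exists_star_cone`). On `U_σ` the point is then integral, so it extends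
(`ToricModel.exists_lift`). This argument works for valuations of arbitrary rank.
Two extensions in `U_σ` and `U_σ₂` agree because a functional separating `σ` from `σ₂`
(`exists_separating`) shows that both factor through the affine chart of `σ ∩ σ₂`
(`ToricModel.lift_unique`).

The last step needs `σ ∩ σ₂` to be a face of `σ` and of `σ₂`, which is not part of `FanData`.
It follows from the existence of the model: an inclusion `τ ⊆ σ` of cones of the fan induces an
open immersion `U_τ → U_σ`, and comparing local rings at the distinguished point of `U_τ` shows
that `τ` is extremal in `σ` (`ToricModel.isExtremalIn`). The convex geometry rests on Weyl's theorem
for rational cones (`weyl`), proved by Fourier–Motzkin elimination.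
-/

/-!
STATEMENT 15: Let `X_Σ` be a normal toric variety over a field `k` of arbitrary
characteristic associated to a fan `Σ` in `N_ℝ`.  Then `X_Σ` is complete if and only if the
support `|Σ| = ⋃_{σ ∈ Σ} σ` is all of `N_ℝ`.

Mathlib has no toric varieties, so the normal toric variety of the fan `Σ` is specified by
the data that determines it up to isomorphism: a scheme `X` over `k` together with open
immersions of the affine toric charts `U_σ = Spec k[σ^∨ ∩ M]` for all cones `σ ∈ Σ`, covering
`X`, compatible with the face/restriction maps, and intersecting along the charts of the
intersection cones (the structure `ToricModel` below).  Completeness means properness of the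
structure morphism `X → Spec k`.
-/
open AlgebraicGeometry CategoryTheory

/-- The pairing `M_ℝ × N_ℝ → ℝ` (via the lattice `M = ℤⁿ`). -/
def pairRZ {n : ℕ} (m : Fin n → ℤ) (x : Fin n → ℝ) : ℝ := ∑ i, (m i : ℝ) * x i

/-- The convex polyhedral cone in `N_ℝ = ℝⁿ` spanned by a finite set of lattice points. -/
def coneOf {n : ℕ} (s : Finset (Fin n → ℤ)) : Set (Fin n → ℝ) :=
  {x | ∃ c : (Fin n → ℤ) → ℝ, (∀ u, 0 ≤ c u) ∧
    x = ∑ u ∈ s, c u • (fun i => (u i : ℝ))}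

/-- A fan in `N_ℝ = ℝⁿ`: a finite collection of strongly convex rational polyhedral cones
(each given by a finite set of lattice generators), closed under taking faces and
intersections. -/
structure FanData (n : ℕ) where
  cones : Finset (Finset (Fin n → ℤ))
  nonempty : cones.Nonempty
  strongly_convex : ∀ s ∈ cones, ∀ x, x ∈ coneOf s → -x ∈ coneOf s → x = 0
  faces : ∀ s ∈ cones, ∀ m : Fin n → ℤ, (∀ x ∈ coneOf s, 0 ≤ pairRZ m x) →
    ∃ t ∈ cones, coneOf t = {x ∈ coneOf s | pairRZ m x = 0}
  inters : ∀ s ∈ cones, ∀ s' ∈ cones, ∃ t ∈ cones, coneOf t = coneOf s ∩ coneOf s'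

/-- The monoid `σ^∨ ∩ M` of lattice points of the dual cone. -/
def dualMonoid {n : ℕ} (s : Finset (Fin n → ℤ)) : AddSubmonoid (Fin n → ℤ) where
  carrier := {m | ∀ x ∈ coneOf s, 0 ≤ pairRZ m x}
  zero_mem' := by
    intro x _
    simp [pairRZ]
  add_mem' := by
    intro a b ha hb x hx
    have h : pairRZ (a + b) x = pairRZ a x + pairRZ b x := by
      simp only [pairRZ, Pi.add_apply, Int.cast_add, add_mul, Finset.sum_add_distrib]
    rw [h]
    exact add_nonneg (ha x hx) (hb x hx)

theorem dualMonoid_antitone {n : ℕ} {s t : Finset (Fin n → ℤ)}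
    (h : coneOf t ⊆ coneOf s) : dualMonoid s ≤ dualMonoid t :=
  fun _ hm x hx => hm x (h hx)

/-- The coordinate ring `k[σ^∨ ∩ M]` of the affine toric variety `U_σ`. -/
noncomputable abbrev sectionRing (k : Type) [Field k] {n : ℕ} (s : Finset (Fin n → ℤ)) :=
  AddMonoidAlgebra k (dualMonoid s)

/-- The restriction map `k[σ^∨ ∩ M] → k[τ^∨ ∩ M]` for a subcone `τ ⊆ σ`. -/
noncomputable def restrictHom (k : Type) [Field k] {n : ℕ} {s t : Finset (Fin n → ℤ)}
    (h : coneOf t ⊆ coneOf s) : sectionRing k s →+* sectionRing k t :=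
  AddMonoidAlgebra.mapDomainRingHom k (AddSubmonoid.inclusion (dualMonoid_antitone h))

/-- A model over `k` of the normal toric variety `X_Σ` of a fan `Σ`: a scheme over `k`
covered by open immersions of the affine toric charts `U_σ = Spec k[σ^∨ ∩ M]`, glued along
the face/intersection charts in the standard way. -/
structure ToricModel (k : Type) [Field k] {n : ℕ} (F : FanData n) where
  X : Scheme
  /-- the structure morphism to `Spec k` -/
  str : X ⟶ Spec (CommRingCat.of k)
  /-- the charts `U_σ → X_Σ` -/
  patch : ∀ s ∈ F.cones, Spec (CommRingCat.of (sectionRing k s)) ⟶ X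
  patch_open : ∀ s hs, IsOpenImmersion (patch s hs)
  patch_str : ∀ s hs, patch s hs ≫ str =
    Spec.map (CommRingCat.ofHom (algebraMap k (sectionRing k s)))
  /-- compatibility of the charts along subcones -/
  patch_compat : ∀ s hs t ht (h : coneOf (n := n) t ⊆ coneOf s),
    patch t ht = Spec.map (CommRingCat.ofHom (restrictHom k h)) ≫ patch s hs
  /-- the charts cover `X` -/
  patch_cover : ∀ x : X, ∃ s hs y, (patch s hs).base y = x
  /-- charts intersect in the chart of the intersection cone -/
  patch_inter : ∀ s hs s' hs' t ht, coneOf (n := n) t = coneOf s ∩ coneOf s' →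
    Set.range (patch t ht).base =
      Set.range (patch s hs).base ∩ Set.range (patch s' hs').base

/-! ### Half-space descriptions of rational cones -/

/-- Fourier–Motzkin elimination of the coefficient `c`: the set of `x` such that `x - c u`
satisfies the inequalities `H` for some `c ≥ 0` is again cut out by finitely many integer
inequalities. These do not depend on the ordered field. -/
lemma fourierMotzkin_step {n : ℕ} (H : Finset (Fin n → ℤ)) (u : Fin n → ℤ) :
    ∃ H' : Finset (Fin n → ℤ), ∀ (𝕜 : Type) [Field 𝕜] [LinearOrder 𝕜] [IsStrictOrderedRing 𝕜]
      (x : Fin n → 𝕜),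
      (∃ c : 𝕜, 0 ≤ c ∧ ∀ h ∈ H, 0 ≤ ∑ i, (h i : 𝕜) * (x i - c * (u i : 𝕜))) ↔
        ∀ h ∈ H', 0 ≤ ∑ i, (h i : 𝕜) * x i := by
  classical
  refine ⟨H.filter (fun h => 0 ≤ h ⬝ᵥ u) ∪
    Finset.image₂ (fun h₁ h₂ => (h₁ ⬝ᵥ u) • h₂ - (h₂ ⬝ᵥ u) • h₁)
      (H.filter (fun h => 0 < h ⬝ᵥ u)) (H.filter (fun h => h ⬝ᵥ u < 0)), ?_⟩
  intro 𝕜 _ _ _ x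
  have e1 : ∀ (h : Fin n → ℤ) (c : 𝕜), ∑ i, (h i : 𝕜) * (x i - c * (u i : 𝕜)) =
      ∑ i, (h i : 𝕜) * x i - c * ((h ⬝ᵥ u : ℤ) : 𝕜) := by
    intro h c
    simp only [dotProduct, Int.cast_sum, Int.cast_mul, Finset.mul_sum, ← Finset.sum_sub_distrib]
    exact Finset.sum_congr rfl fun i _ => by ring
  have e2 : ∀ (h₁ h₂ : Fin n → ℤ),
      ∑ i, ((((h₁ ⬝ᵥ u) • h₂ - (h₂ ⬝ᵥ u) • h₁) i : ℤ) : 𝕜) * x i =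
      ((h₁ ⬝ᵥ u : ℤ) : 𝕜) * (∑ i, (h₂ i : 𝕜) * x i) -
        ((h₂ ⬝ᵥ u : ℤ) : 𝕜) * (∑ i, (h₁ i : 𝕜) * x i) := by
    intro h₁ h₂
    simp only [Finset.mul_sum, ← Finset.sum_sub_distrib]
    refine Finset.sum_congr rfl fun i _ => ?_
    simp only [Pi.sub_apply, Pi.smul_apply, smul_eq_mul, Int.cast_sub, Int.cast_mul]
    ring
  simp only [e1]
  constructor
  · rintro ⟨c, hc, hH⟩ h hh
    rcases Finset.mem_union.1 hh with hh | hh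
    · obtain ⟨h1, h2⟩ := Finset.mem_filter.1 hh
      have h3 : (0 : 𝕜) ≤ ((h ⬝ᵥ u : ℤ) : 𝕜) := by exact_mod_cast h2
      have := hH h h1
      nlinarith [mul_nonneg hc h3]
    · obtain ⟨h₁, hh₁, h₂, hh₂, rfl⟩ := Finset.mem_image₂.1 hh
      obtain ⟨a1, a2⟩ := Finset.mem_filter.1 hh₁
      obtain ⟨b1, b2⟩ := Finset.mem_filter.1 hh₂
      rw [e2]
      have a3 : (0 : 𝕜) < ((h₁ ⬝ᵥ u : ℤ) : 𝕜) := by exact_mod_cast a2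
      have b3 : ((h₂ ⬝ᵥ u : ℤ) : 𝕜) < 0 := by exact_mod_cast b2
      have p1 := mul_nonneg a3.le (hH h₂ b1)
      have p2 := mul_nonneg (neg_nonneg.2 b3.le) (hH h₁ a1)
      linarith
  · intro hH'
    let f : (Fin n → ℤ) → 𝕜 := fun h => (∑ i, (h i : 𝕜) * x i) / ((h ⬝ᵥ u : ℤ) : 𝕜)
    -- the least admissible value of `c` dictated by the lower bounds
    let B : Finset 𝕜 := insert 0 ((H.filter (fun h => h ⬝ᵥ u < 0)).image f)
    have hB : B.Nonempty := ⟨0, Finset.mem_insert_self _ _⟩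
    have hmax := B.max'_mem hB
    have hle : ∀ b ∈ B, b ≤ B.max' hB := fun b hb => B.le_max' b hb
    generalize B.max' hB = c at hmax hle
    have hc : 0 ≤ c := hle 0 (Finset.mem_insert_self _ _)
    refine ⟨c, hc, fun h hh => ?_⟩
    rcases lt_trichotomy (h ⬝ᵥ u) 0 with hu | hu | hu
    · have h3 : ((h ⬝ᵥ u : ℤ) : 𝕜) < 0 := by exact_mod_cast hu
      have := hle (f h) (Finset.mem_insert_of_mem
        (Finset.mem_image_of_mem f (Finset.mem_filter.2 ⟨hh, hu⟩)))
      have := (div_le_iff_of_neg h3).1 this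
      linarith
    · have := hH' h (Finset.mem_union_left _ (Finset.mem_filter.2 ⟨hh, hu.ge⟩))
      rw [hu]; simpa using this
    · have h3 : (0 : 𝕜) < ((h ⬝ᵥ u : ℤ) : 𝕜) := by exact_mod_cast hu
      rcases Finset.mem_insert.1 hmax with h0 | h0
      · subst h0
        have := hH' h (Finset.mem_union_left _ (Finset.mem_filter.2 ⟨hh, hu.le⟩))
        simpa using this
      · obtain ⟨g, hg, rfl⟩ := Finset.mem_image.1 h0
        have hgu := (Finset.mem_filter.1 hg).2
        have g3 : ((g ⬝ᵥ u : ℤ) : 𝕜) < 0 := by exact_mod_cast hgu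
        have := hH' _ (Finset.mem_union_right _
          (Finset.mem_image₂_of_mem (Finset.mem_filter.2 ⟨hh, hu⟩) hg))
        rw [e2] at this
        have key : f g * ((g ⬝ᵥ u : ℤ) : 𝕜) = ∑ i, (g i : 𝕜) * x i :=
          div_mul_cancel₀ _ g3.ne
        rw [← key] at this
        have h4 : 0 ≤ (-((g ⬝ᵥ u : ℤ) : 𝕜)) *
          (∑ i, (h i : 𝕜) * x i - f g * ((h ⬝ᵥ u : ℤ) : 𝕜)) := by linarith
        exact nonneg_of_mul_nonneg_right h4 (neg_pos.2 g3)

/-- Weyl's theorem: a finitely generated integer cone is cut out by finitely many integer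
inequalities. The same inequalities serve over every ordered field; comparing `ℝ` with `ℚ`, a
lattice point that is a nonnegative real combination of the generators is also a rational one. -/
theorem weyl {n : ℕ} (s : Finset (Fin n → ℤ)) :
    ∃ H : Finset (Fin n → ℤ), ∀ (𝕜 : Type) [Field 𝕜] [LinearOrder 𝕜] [IsStrictOrderedRing 𝕜]
      (x : Fin n → 𝕜),
      (∃ c : (Fin n → ℤ) → 𝕜, (∀ u, 0 ≤ c u) ∧ x = ∑ u ∈ s, c u • (fun i => (u i : 𝕜))) ↔
        ∀ h ∈ H, 0 ≤ ∑ i, (h i : 𝕜) * x i := by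
  classical
  induction s using Finset.induction_on with
  | empty =>
    refine ⟨Finset.univ.image (fun i => Pi.single i 1) ∪
      Finset.univ.image (fun i => Pi.single i (-1)), ?_⟩
    intro 𝕜 _ _ _ x
    simp only [Finset.sum_empty]
    constructor
    · rintro ⟨c, -, rfl⟩ h -
      simp
    · intro hH
      refine ⟨0, fun _ => le_rfl, funext fun i => ?_⟩
      have h1 := hH (Pi.single i 1) (by simp)
      have h2 := hH (Pi.single i (-1)) (by simp)
      simp [Pi.single_apply] at h1 h2
      exact le_antisymm h2 h1
  | insert u s hu ih =>
    obtain ⟨H, hH⟩ := ih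
    obtain ⟨H', hH'⟩ := fourierMotzkin_step H u
    refine ⟨H', fun 𝕜 _ _ _ x => ?_⟩
    rw [← hH' 𝕜 x]
    constructor
    · rintro ⟨c, hc, rfl⟩
      refine ⟨c u, hc u, ?_⟩
      refine (hH 𝕜 _).1 ⟨c, hc, ?_⟩
      funext i
      rw [Finset.sum_insert hu]
      simp
    · rintro ⟨c, hc, h⟩
      obtain ⟨d, hd, e⟩ := (hH 𝕜 (fun i => x i - c * (u i : 𝕜))).2 h
      refine ⟨Function.update d u c, fun v => ?_, ?_⟩
      · by_cases hv : v = u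
        · subst hv; simpa using hc
        · simpa [hv] using hd v
      · rw [Finset.sum_insert hu, Finset.sum_congr rfl
          (g := fun v => d v • (fun i => (v i : 𝕜)))
          (fun v hv => by rw [Function.update_of_ne (ne_of_mem_of_not_mem hv hu)]), ← e]
        funext i
        simp

/-! ### Rational polyhedral cones and their lattice points -/

lemma pairRZ_intCast {n : ℕ} (m u : Fin n → ℤ) :
    pairRZ m (fun i => (u i : ℝ)) = ((m ⬝ᵥ u : ℤ) : ℝ) := by
  simp [pairRZ, dotProduct]

lemma pairRZ_add {n : ℕ} (m : Fin n → ℤ) (x y : Fin n → ℝ) :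
    pairRZ m (x + y) = pairRZ m x + pairRZ m y := by
  simp [pairRZ, mul_add, Finset.sum_add_distrib]

lemma pairRZ_sub {n : ℕ} (m : Fin n → ℤ) (x y : Fin n → ℝ) :
    pairRZ m (x - y) = pairRZ m x - pairRZ m y := by
  simp [pairRZ, mul_sub, Finset.sum_sub_distrib]

lemma pairRZ_neg {n : ℕ} (m : Fin n → ℤ) (x : Fin n → ℝ) :
    pairRZ m (-x) = -pairRZ m x := by
  simp [pairRZ]

lemma pairRZ_smul {n : ℕ} (m : Fin n → ℤ) (c : ℝ) (x : Fin n → ℝ) :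
    pairRZ m (c • x) = c * pairRZ m x := by
  simp only [pairRZ, Finset.mul_sum, Pi.smul_apply, smul_eq_mul]
  exact Finset.sum_congr rfl fun i _ => by ring

lemma pairRZ_sum {n : ℕ} {ι : Type*} (m : Fin n → ℤ) (s : Finset ι) (f : ι → Fin n → ℝ) :
    pairRZ m (∑ j ∈ s, f j) = ∑ j ∈ s, pairRZ m (f j) := by
  simp only [pairRZ, Finset.sum_apply, Finset.mul_sum]
  exact Finset.sum_comm

lemma pairRZ_add_left {n : ℕ} (a b : Fin n → ℤ) (x : Fin n → ℝ) :
    pairRZ (a + b) x = pairRZ a x + pairRZ b x := by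
  simp [pairRZ, add_mul, Finset.sum_add_distrib]

lemma pairRZ_neg_left {n : ℕ} (a : Fin n → ℤ) (x : Fin n → ℝ) :
    pairRZ (-a) x = -pairRZ a x := by
  simp [pairRZ]

lemma pairRZ_nsmul_left {n : ℕ} (k : ℕ) (a : Fin n → ℤ) (x : Fin n → ℝ) :
    pairRZ (k • a) x = k * pairRZ a x := by
  simp only [pairRZ, Finset.mul_sum]
  exact Finset.sum_congr rfl fun i _ => by simp; ring

lemma zero_mem_coneOf {n : ℕ} (s : Finset (Fin n → ℤ)) : (0 : Fin n → ℝ) ∈ coneOf s :=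
  ⟨0, fun _ => le_rfl, by simp⟩

lemma add_mem_coneOf {n : ℕ} {s : Finset (Fin n → ℤ)} {x y : Fin n → ℝ}
    (hx : x ∈ coneOf s) (hy : y ∈ coneOf s) : x + y ∈ coneOf s := by
  obtain ⟨c, hc, rfl⟩ := hx
  obtain ⟨d, hd, rfl⟩ := hy
  exact ⟨c + d, fun u => add_nonneg (hc u) (hd u), by simp [add_smul, Finset.sum_add_distrib]⟩

lemma smul_mem_coneOf {n : ℕ} {s : Finset (Fin n → ℤ)} {x : Fin n → ℝ} {r : ℝ} (hr : 0 ≤ r)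
    (hx : x ∈ coneOf s) : r • x ∈ coneOf s := by
  obtain ⟨c, hc, rfl⟩ := hx
  exact ⟨r • c, fun u => mul_nonneg hr (hc u), by simp [Finset.smul_sum, mul_smul]⟩

lemma gen_mem_coneOf {n : ℕ} {s : Finset (Fin n → ℤ)} {u : Fin n → ℤ} (hu : u ∈ s) :
    (fun i => (u i : ℝ)) ∈ coneOf s := by
  classical
  refine ⟨Pi.single u 1, fun v => ?_, ?_⟩
  · by_cases h : v = u
    · subst h; simp
    · simp [h]
  · rw [Finset.sum_eq_single u]
    · simp
    · intro b _ hb; simp [hb]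
    · exact fun h => absurd hu h

lemma sum_mem_coneOf {n : ℕ} {s : Finset (Fin n → ℤ)} {ι : Type*} (A : Finset ι)
    (f : ι → Fin n → ℝ) (h : ∀ i ∈ A, f i ∈ coneOf s) : ∑ i ∈ A, f i ∈ coneOf s := by
  classical
  induction A using Finset.induction_on with
  | empty => simpa using zero_mem_coneOf s
  | insert a A ha ih =>
    rw [Finset.sum_insert ha]
    exact add_mem_coneOf (h a (Finset.mem_insert_self _ _))
      (ih fun i hi => h i (Finset.mem_insert_of_mem hi))

lemma mem_dualMonoid_def {n : ℕ} {s : Finset (Fin n → ℤ)} {m : Fin n → ℤ} :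
    m ∈ dualMonoid s ↔ ∀ x ∈ coneOf s, 0 ≤ pairRZ m x := Iff.rfl

lemma mem_dualMonoid_iff {n : ℕ} {s : Finset (Fin n → ℤ)} {m : Fin n → ℤ} :
    m ∈ dualMonoid s ↔ ∀ u ∈ s, 0 ≤ m ⬝ᵥ u := by
  constructor
  · intro h u hu
    have := h _ (gen_mem_coneOf hu)
    rw [pairRZ_intCast] at this
    exact_mod_cast this
  · rintro h x ⟨c, hc, rfl⟩
    rw [pairRZ_sum]
    refine Finset.sum_nonneg fun u hu => ?_
    rw [pairRZ_smul, pairRZ_intCast]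
    exact mul_nonneg (hc u) (by exact_mod_cast h u hu)

lemma exists_halfspaces {n : ℕ} (s : Finset (Fin n → ℤ)) :
    ∃ H : Finset (Fin n → ℤ), ∀ x, x ∈ coneOf s ↔ ∀ h ∈ H, 0 ≤ pairRZ h x := by
  obtain ⟨H, hH⟩ := weyl s
  exact ⟨H, hH ℝ⟩

/-- A rational cone is its own bidual, already when tested against lattice functionals only. -/
lemma mem_coneOf_of_dual {n : ℕ} {s : Finset (Fin n → ℤ)} {x : Fin n → ℝ}
    (h : ∀ m ∈ dualMonoid s, 0 ≤ pairRZ m x) : x ∈ coneOf s := by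
  obtain ⟨H, hH⟩ := exists_halfspaces s
  exact (hH x).2 fun m hm => h m fun y hy => (hH y).1 hy m hm

/-- A lattice point of the real cone spanned by `s` has a positive multiple in the monoid
spanned by `s`. -/
lemma exists_nat_combination {n : ℕ} {s : Finset (Fin n → ℤ)} {m : Fin n → ℤ}
    (hm : (fun i => (m i : ℝ)) ∈ coneOf s) :
    ∃ N : ℕ, 0 < N ∧ ∃ a : (Fin n → ℤ) → ℕ, N • m = ∑ u ∈ s, a u • u := by
  obtain ⟨H, hH⟩ := weyl s
  have h1 : ∀ h ∈ H, 0 ≤ ∑ i, (h i : ℚ) * (m i : ℚ) := by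
    intro h hh
    have := (hH ℝ _).1 hm h hh
    exact_mod_cast this
  obtain ⟨c, hc, e⟩ := (hH ℚ _).2 h1
  refine ⟨∏ u ∈ s, (c u).den, Finset.prod_pos fun u _ => (c u).den_pos,
    fun u => ((∏ v ∈ s, (c v).den) / (c u).den) * (c u).num.toNat, ?_⟩
  funext i
  have e' := congrFun e i
  simp only [Finset.sum_apply, Pi.smul_apply, smul_eq_mul] at e'
  simp only [Finset.sum_apply, Pi.smul_apply, nsmul_eq_mul, Pi.mul_apply, Pi.natCast_apply]
  have : (((∏ u ∈ s, (c u).den : ℕ) : ℚ)) * (m i : ℚ) = ∑ u ∈ s,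
      ((((∏ v ∈ s, (c v).den) / (c u).den) * (c u).num.toNat : ℕ) : ℚ) * (u i : ℚ) := by
    rw [e', Finset.mul_sum]
    refine Finset.sum_congr rfl fun u hu => ?_
    rw [← mul_assoc]
    congr 1
    obtain ⟨k, hk⟩ := Finset.dvd_prod_of_mem (fun v => (c v).den) hu
    rw [hk, Nat.mul_div_cancel_left _ (c u).den_pos]
    have h2 : (((c u).num.toNat : ℕ) : ℚ) = (c u).num := by
      exact_mod_cast Int.toNat_of_nonneg (Rat.num_nonneg.2 (hc u))
    push_cast
    rw [h2]
    have h3 := Rat.den_mul_eq_num (c u)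
    rw [← h3]; ring
  apply Int.cast_injective (α := ℚ)
  rw [Int.cast_sum]
  simpa only [Int.cast_mul, Int.cast_natCast] using this

/-! ### Positive functionals and separation -/

/-- There is a functional in the dual cone (a relative interior point) that is strictly positive
on every generator outside the lineality space. -/
lemma exists_dual_pos {n : ℕ} (G : Finset (Fin n → ℤ)) :
    ∃ m ∈ dualMonoid G, ∀ u ∈ G, 0 < m ⬝ᵥ u ∨ (fun i => ((-u) i : ℝ)) ∈ coneOf G := by
  classical
  have h1 : ∀ u : Fin n → ℤ, ∃ m ∈ dualMonoid G,
      u ∈ G → (0 < m ⬝ᵥ u ∨ (fun i => ((-u) i : ℝ)) ∈ coneOf G) := by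
    intro u
    by_cases hu : (fun i => ((-u) i : ℝ)) ∈ coneOf G
    · exact ⟨0, zero_mem _, fun _ => Or.inr hu⟩
    · have : ¬ ∀ m ∈ dualMonoid G, 0 ≤ pairRZ m (fun i => ((-u) i : ℝ)) :=
        fun h => hu (mem_coneOf_of_dual h)
      push Not at this
      obtain ⟨m, hm, hlt⟩ := this
      have h2 : pairRZ m (fun i => ((-u) i : ℝ)) = -((m ⬝ᵥ u : ℤ) : ℝ) := by
        rw [← pairRZ_intCast, ← pairRZ_neg]; congr 1; funext i; simp
      rw [h2] at hlt
      refine ⟨m, hm, fun _ => Or.inl ?_⟩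
      have : (0 : ℝ) < ((m ⬝ᵥ u : ℤ) : ℝ) := by linarith
      exact_mod_cast this
  choose f hf hf' using h1
  -- one functional per generator; their sum is positive wherever one of them is
  refine ⟨∑ u ∈ G, f u, sum_mem fun u _ => hf u, fun u hu => ?_⟩
  rcases hf' u hu with h | h
  · left
    rw [sum_dotProduct]
    exact Finset.sum_pos' (fun v _ => mem_dualMonoid_iff.1 (hf v) u hu) ⟨u, hu, h⟩
  · exact Or.inr h

/-- A finite part of an additively closed set `S` with `0 ∉ S` lies strictly on one side of a
hyperplane: a generator `g` in the lineality space would express `0` as `N g` plus a combination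
of elements of `S` with natural coefficients. -/
lemma exists_functional_pos {n : ℕ} (S : Set (Fin n → ℤ))
    (hadd : ∀ a ∈ S, ∀ b ∈ S, a + b ∈ S) (h0 : (0 : Fin n → ℤ) ∉ S)
    (G : Finset (Fin n → ℤ)) (hG : ∀ g ∈ G, g ∈ S) :
    ∃ u : Fin n → ℤ, ∀ g ∈ G, 0 < u ⬝ᵥ g := by
  classical
  obtain ⟨u, -, hu⟩ := exists_dual_pos G
  refine ⟨u, fun g hg => (hu g hg).resolve_right fun hneg => ?_⟩
  obtain ⟨N, hN, a, ha⟩ := exists_nat_combination (m := -g) hneg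
  have hmul : ∀ (k : ℕ) (x), x ∈ S → (k + 1) • x ∈ S := by
    intro k x hx
    induction k with
    | zero => simpa using hx
    | succ k ih => rw [succ_nsmul]; exact hadd _ ih _ hx
  have hN' : N • g ∈ S := by
    obtain ⟨k, rfl⟩ := Nat.exists_eq_succ_of_ne_zero hN.ne'
    exact hmul k g (hG g hg)
  have key : ∀ A : Finset (Fin n → ℤ), A ⊆ G → N • g + ∑ v ∈ A, a v • v ∈ S := by
    intro A
    induction A using Finset.induction_on with
    | empty => intro _; simpa using hN'
    | insert v A hv ih =>
      intro hA
      have h1 := ih ((Finset.subset_insert _ _).trans hA)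
      rw [Finset.sum_insert hv, add_left_comm]
      rcases Nat.eq_zero_or_pos (a v) with h | h
      · simpa [h] using h1
      · obtain ⟨k, hk⟩ := Nat.exists_eq_succ_of_ne_zero h.ne'
        rw [hk]
        exact hadd _ (hmul k v (hG v (hA (Finset.mem_insert_self _ _)))) _ h1
  have := key G subset_rfl
  rw [← ha] at this
  apply h0
  simpa using this

/-- If `b` is nonnegative on the face of `σ` cut out by `m ∈ σ^∨`, then `b + N m ∈ σ^∨` for all
large `N`. -/
lemma exists_add_nsmul_mem_dual {n : ℕ} {s : Finset (Fin n → ℤ)} {m b : Fin n → ℤ}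
    (hm : m ∈ dualMonoid s) (hb : ∀ u ∈ s, m ⬝ᵥ u = 0 → 0 ≤ b ⬝ᵥ u) :
    ∃ N₀ : ℕ, ∀ N, N₀ ≤ N → b + N • m ∈ dualMonoid s := by
  refine ⟨∑ u ∈ s, (b ⬝ᵥ u).natAbs, fun N hN => mem_dualMonoid_iff.2 fun u hu => ?_⟩
  rw [add_dotProduct, smul_dotProduct]
  have h0 := mem_dualMonoid_iff.1 hm u hu
  rcases h0.eq_or_lt with h | h
  · rw [← h]; simpa using hb u hu h.symm
  · have h1 : (b ⬝ᵥ u).natAbs ≤ ∑ u ∈ s, (b ⬝ᵥ u).natAbs :=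
      Finset.single_le_sum (f := fun u => (b ⬝ᵥ u).natAbs) (fun _ _ => Nat.zero_le _) hu
    have h2 : (((b ⬝ᵥ u).natAbs : ℕ) : ℤ) ≤ N := by exact_mod_cast h1.trans hN
    rw [nsmul_eq_mul]
    have h3 : (N : ℤ) ≤ N * (m ⬝ᵥ u) := by nlinarith
    have h4 := neg_abs_le (b ⬝ᵥ u)
    rw [Int.natCast_natAbs] at h2
    omega

/-- A subset `A` of `C` is extremal if a sum of two elements of `C` lies in `A` only when
the summands do. The faces of a cone are extremal; `FanData` does not record that the
intersection of two of its cones is a face of each, and extremality is the form in which this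
property is recovered from the charts being open immersions (`ToricModel.isExtremalIn`). -/
def IsExtremalIn {n : ℕ} (A C : Set (Fin n → ℝ)) : Prop :=
  ∀ x ∈ C, ∀ y ∈ C, x + y ∈ A → x ∈ A

/-- Separation lemma: if `σ ∩ σ₂` is extremal in both cones, a relative interior point `m` of the dual of
`σ + (-σ₂)` cuts it out as a face of `σ`, and `-m` cuts it out as a face of `σ₂`. -/
lemma exists_separating {n : ℕ} {s s' t : Finset (Fin n → ℤ)}
    (ht : coneOf t = coneOf s ∩ coneOf s') (h1 : IsExtremalIn (coneOf t) (coneOf s))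
    (h2 : IsExtremalIn (coneOf t) (coneOf s')) :
    ∃ m ∈ dualMonoid s, -m ∈ dualMonoid s' ∧ coneOf t = {x ∈ coneOf s | pairRZ m x = 0} ∧
      coneOf t = {x ∈ coneOf s' | pairRZ (-m) x = 0} := by
  classical
  set G := s ∪ s'.image (fun u => -u) with hG
  have hsG : coneOf s ⊆ coneOf G := by
    rintro x ⟨c, hc, rfl⟩
    refine sum_mem_coneOf _ _ fun u hu => smul_mem_coneOf (hc u)
      (gen_mem_coneOf (Finset.mem_union_left _ hu))
  have hsG' : ∀ x ∈ coneOf s', -x ∈ coneOf G := by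
    rintro x ⟨c, hc, rfl⟩
    rw [← Finset.sum_neg_distrib]
    refine sum_mem_coneOf _ _ fun u hu => ?_
    rw [← smul_neg]
    refine smul_mem_coneOf (hc u) ?_
    have := gen_mem_coneOf (s := G) (u := -u)
      (Finset.mem_union_right _ (Finset.mem_image_of_mem _ hu))
    convert this using 1
    funext i; simp
  have hdec : ∀ x ∈ coneOf G, ∃ y ∈ coneOf s, ∃ z ∈ coneOf s', x = y - z := by
    rintro x ⟨c, hc, rfl⟩
    have : ∀ A ⊆ G, ∃ y ∈ coneOf s, ∃ z ∈ coneOf s',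
        ∑ u ∈ A, c u • (fun i => (u i : ℝ)) = y - z := by
      intro A
      induction A using Finset.induction_on with
      | empty => intro _; exact ⟨0, zero_mem_coneOf _, 0, zero_mem_coneOf _, by simp⟩
      | insert v A hv ih =>
        intro hA
        obtain ⟨y, hy, z, hz, e⟩ := ih ((Finset.subset_insert _ _).trans hA)
        rw [Finset.sum_insert hv, e]
        rcases Finset.mem_union.1 (hA (Finset.mem_insert_self _ _)) with h | h
        · exact ⟨_, add_mem_coneOf (smul_mem_coneOf (hc v) (gen_mem_coneOf h)) hy, z, hz,
            by abel⟩
        · obtain ⟨w, hw, rfl⟩ := Finset.mem_image.1 h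
          refine ⟨y, hy, _, add_mem_coneOf (smul_mem_coneOf (hc (-w)) (gen_mem_coneOf hw)) hz, ?_⟩
          funext i
          simp
          ring
    exact this G subset_rfl
  obtain ⟨m, hm, hpos⟩ := exists_dual_pos G
  have hms : m ∈ dualMonoid s := fun x hx => hm x (hsG hx)
  have hms' : -m ∈ dualMonoid s' := fun x hx => by
    have := hm _ (hsG' x hx)
    rwa [pairRZ_neg, ← pairRZ_neg_left] at this
  -- an element of the cone on which `m` vanishes lies in its lineality space
  have hlin : ∀ x ∈ coneOf G, pairRZ m x = 0 → -x ∈ coneOf G := by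
    rintro x ⟨c, hc, rfl⟩ h0
    rw [pairRZ_sum] at h0
    have hnn : ∀ u ∈ G, 0 ≤ pairRZ m (c u • fun i => (u i : ℝ)) := fun u hu =>
      hm _ (smul_mem_coneOf (hc u) (gen_mem_coneOf hu))
    rw [Finset.sum_eq_zero_iff_of_nonneg hnn] at h0
    rw [← Finset.sum_neg_distrib]
    refine sum_mem_coneOf _ _ fun u hu => ?_
    rcases hpos u hu with h | h
    · have h3 := h0 u hu
      rw [pairRZ_smul, pairRZ_intCast, mul_eq_zero] at h3
      have : c u = 0 := h3.resolve_right (by exact_mod_cast h.ne')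
      rw [this]; simpa using zero_mem_coneOf G
    · have := smul_mem_coneOf (hc u) h
      convert this using 1
      funext i; simp
  refine ⟨m, hms, hms', ?_, ?_⟩
  · ext x
    constructor
    · intro hx
      have hx' := hx
      rw [ht] at hx'
      refine ⟨hx'.1, le_antisymm ?_ (hms x hx'.1)⟩
      have := hms' x hx'.2
      rw [pairRZ_neg_left] at this
      linarith
    · rintro ⟨hx, h0⟩
      obtain ⟨y, hy, z, hz, e⟩ := hdec _ (hlin x (hsG hx) h0)
      refine h1 x hx y hy ?_
      rw [ht]
      have e' : x + y = z := by
        have : z = y - (-x) := by rw [e]; abel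
        rw [this]; abel
      exact ⟨add_mem_coneOf hx hy, e' ▸ hz⟩
  · ext x
    constructor
    · intro hx
      have hx' := hx
      rw [ht] at hx'
      refine ⟨hx'.2, le_antisymm ?_ (hms' x hx'.2)⟩
      have := hms x hx'.1
      rw [pairRZ_neg_left]
      linarith
    · rintro ⟨hx, h0⟩
      have h0' : pairRZ m (-x) = 0 := by rw [pairRZ_neg, ← pairRZ_neg_left]; exact h0
      obtain ⟨y, hy, z, hz, e⟩ := hdec _ (hlin (-x) (hsG' x hx) h0')
      refine h2 x hx z hz ?_
      rw [ht]
      have e' : x + z = y := by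
        have : y = - -x + z := by rw [e]; abel
        rw [this, neg_neg]
      exact ⟨e' ▸ hy, add_mem_coneOf hx hz⟩

/-! ### Finite generation of the dual monoid -/

/-- Gordan's lemma. The dual monoid is the image of the equalizer of two homomorphisms out of
some `ℕ^r`, and such equalizers are finitely generated. -/
lemma dualMonoid_fg {n : ℕ} (s : Finset (Fin n → ℤ)) : AddMonoid.FG (dualMonoid s) := by
  classical
  -- `(p, q, y)` stands for the lattice point `p - q` together with its slacks `y`
  let f : ((Fin n → ℕ) × (Fin n → ℕ)) × (s → ℕ) →+ (s → ℤ) :=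
    { toFun := fun e u => (fun i => (e.1.1 i : ℤ)) ⬝ᵥ u.1
      map_zero' := by ext; simp [dotProduct]
      map_add' := by intro a b; ext; simp [dotProduct, add_mul, Finset.sum_add_distrib] }
  let g : ((Fin n → ℕ) × (Fin n → ℕ)) × (s → ℕ) →+ (s → ℤ) :=
    { toFun := fun e u => (fun i => (e.1.2 i : ℤ)) ⬝ᵥ u.1 + (e.2 u : ℤ)
      map_zero' := by ext; simp [dotProduct]
      map_add' := by
        intro a b; ext; simp [dotProduct, add_mul, Finset.sum_add_distrib]; ring }
  have hfg : (f.eqLocusM g).FG := AddSubmonoid.fg_eqLocusM f g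
  let d : ((Fin n → ℕ) × (Fin n → ℕ)) × (s → ℕ) →+ (Fin n → ℤ) :=
    { toFun := fun e i => (e.1.1 i : ℤ) - e.1.2 i
      map_zero' := by ext; simp
      map_add' := by intro a b; ext; simp; ring }
  have hmap : (f.eqLocusM g).map d = dualMonoid s := by
    ext m
    rw [AddSubmonoid.mem_map, mem_dualMonoid_iff]
    constructor
    · rintro ⟨e, he, rfl⟩ u hu
      have h1 : (fun i => (e.1.1 i : ℤ)) ⬝ᵥ u =
        (fun i => (e.1.2 i : ℤ)) ⬝ᵥ u + (e.2 ⟨u, hu⟩ : ℤ) := congrFun he ⟨u, hu⟩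
      have h2 : d e = (fun i => (e.1.1 i : ℤ)) - (fun i => (e.1.2 i : ℤ)) := rfl
      rw [h2, sub_dotProduct, h1]
      simp
    · intro h
      have h2 : (fun i => (((m i).toNat : ℕ) : ℤ)) - (fun i => (((-m i).toNat : ℕ) : ℤ)) = m := by
        funext i
        exact Int.toNat_sub_toNat_neg (m i)
      refine ⟨((fun i => (m i).toNat, fun i => (-m i).toNat), fun u => (m ⬝ᵥ u.1).toNat), ?_, h2⟩
      funext u
      change (fun i => (((m i).toNat : ℕ) : ℤ)) ⬝ᵥ u.1 =
        (fun i => (((-m i).toNat : ℕ) : ℤ)) ⬝ᵥ u.1 + (((m ⬝ᵥ u.1).toNat : ℕ) : ℤ)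
      rw [Int.toNat_of_nonneg (h u.1 u.2)]
      nth_rewrite 3 [← h2]
      rw [sub_dotProduct]
      ring
  rw [AddMonoid.fg_iff_addSubmonoid_fg, ← hmap]
  exact hfg.map d

/-! ### The support of a fan -/

/-- The support is closed and rational points are dense, so if the support is not everything
it misses a rational point; being stable under positive scaling, it also misses a lattice
point. -/
lemma exists_int_notMem_support {n : ℕ} (F : FanData n)
    (h : (⋃ s ∈ F.cones, coneOf s) ≠ Set.univ) :
    ∃ u : Fin n → ℤ, ∀ s ∈ F.cones, (fun i => (u i : ℝ)) ∉ coneOf s := by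
  have hcl : IsClosed (⋃ s ∈ F.cones, coneOf s) := by
    refine isClosed_biUnion_finset fun s _ => ?_
    obtain ⟨H, hH⟩ := exists_halfspaces s
    have : coneOf s = ⋂ h ∈ H, {x | 0 ≤ pairRZ h x} := by
      ext x; simpa using hH x
    rw [this]
    refine isClosed_biInter fun h _ => isClosed_le continuous_const ?_
    unfold pairRZ
    fun_prop
  have hne : (⋃ s ∈ F.cones, coneOf s)ᶜ.Nonempty := Set.nonempty_compl.2 h
  have hd : DenseRange (fun q : Fin n → ℚ => fun i => (q i : ℝ)) :=
    DenseRange.piMap (fun _ => Rat.denseRange_cast)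
  obtain ⟨q, hq⟩ := hd.exists_mem_open hcl.isOpen_compl hne
  refine ⟨fun i => (q i).num * (∏ j ∈ Finset.univ.erase i, ((q j).den : ℤ)), fun s hs hmem => ?_⟩
  apply hq
  simp only [Set.mem_iUnion]
  refine ⟨s, hs, ?_⟩
  have hD : (0 : ℝ) < ∏ j, ((q j).den : ℝ) :=
    Finset.prod_pos fun j _ => by exact_mod_cast (q j).den_pos
  have := smul_mem_coneOf (inv_nonneg.2 hD.le) hmem
  convert this using 1
  funext i
  simp only [Pi.smul_apply, smul_eq_mul]
  rw [eq_inv_mul_iff_mul_eq₀ hD.ne', ← Finset.mul_prod_erase _ _ (Finset.mem_univ i)]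
  have h3 : ((q i).den : ℝ) * (q i : ℝ) = (q i).num := by
    exact_mod_cast Rat.den_mul_eq_num (q i)
  push_cast
  rw [← h3]; ring

/-- Suppose the fan covers `N_ℝ`, let `τ` be one of its cones, and let `S` be an additively closed
set of characters not containing `0`. Then some cone `σ ⊇ τ` of the fan has `σ^∨ ∩ τ^⊥`
disjoint from `S`.

Otherwise choose `f_σ ∈ σ^∨ ∩ τ^⊥ ∩ S` for every `σ ⊇ τ`, and `u` with `⟨f_σ, u⟩ > 0` for all
of them. For `x` in the relative interior of `τ`, the points `N x - u` lie infinitely often in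
one cone `σ`. That cone contains `x`, hence `τ`, and evaluating `f_σ` at `N x - u` gives
`-⟨f_σ, u⟩ ≥ 0`, a contradiction. -/
lemma exists_star_cone {n : ℕ} (F : FanData n)
    (hext : ∀ s ∈ F.cones, ∀ t ∈ F.cones, coneOf t ⊆ coneOf s →
      IsExtremalIn (coneOf t) (coneOf s))
    (hsupp : (⋃ s ∈ F.cones, coneOf s) = Set.univ) {t : Finset (Fin n → ℤ)} (ht : t ∈ F.cones)
    (S : Set (Fin n → ℤ)) (hadd : ∀ a ∈ S, ∀ b ∈ S, a + b ∈ S) (h0 : (0 : Fin n → ℤ) ∉ S) :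
    ∃ s ∈ F.cones, coneOf t ⊆ coneOf s ∧
      ∀ m ∈ dualMonoid s, (∀ x ∈ coneOf t, pairRZ m x = 0) → m ∉ S := by
  classical
  by_contra! hcon
  choose! f hf1 hf2 hf3 using hcon
  obtain ⟨u, hu⟩ := exists_functional_pos S hadd h0
    ((F.cones.filter fun s => coneOf t ⊆ coneOf s).image f) (by
      intro g hg
      obtain ⟨s, hs, rfl⟩ := Finset.mem_image.1 hg
      obtain ⟨hs1, hs2⟩ := Finset.mem_filter.1 hs
      exact hf3 s hs1 hs2)
  -- `x` is a point in the relative interior of the cone of `t`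
  let x : Fin n → ℝ := ∑ v ∈ t, fun i => (v i : ℝ)
  have hx : x ∈ coneOf t := sum_mem_coneOf _ _ fun v hv => gen_mem_coneOf hv
  let ur : Fin n → ℝ := fun i => (u i : ℝ)
  have hcov : ∀ N : ℕ, ∃ s : F.cones, (N : ℝ) • x - ur ∈ coneOf s.1 := by
    intro N
    have : (N : ℝ) • x - ur ∈ ⋃ s ∈ F.cones, coneOf s := by rw [hsupp]; trivial
    simp only [Set.mem_iUnion] at this
    obtain ⟨s, hs, h⟩ := this
    exact ⟨⟨s, hs⟩, h⟩
  choose c hc using hcov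
  obtain ⟨⟨s, hs⟩, hinf⟩ := Finite.exists_infinite_fiber c
  rw [Set.infinite_coe_iff] at hinf
  -- `s` is closed and contains `x - u / N` for arbitrarily large `N`
  have hxs : x ∈ coneOf s := by
    obtain ⟨H, hH⟩ := exists_halfspaces s
    refine (hH x).2 fun h hh => ?_
    by_contra! hlt
    obtain ⟨N₀, hN₀⟩ := exists_nat_gt (pairRZ h ur / pairRZ h x)
    obtain ⟨N, hN, hlt'⟩ := hinf.exists_gt N₀
    have h1 := hc N
    rw [show c N = ⟨s, hs⟩ from hN] at h1
    have h2 := (hH _).1 h1 h hh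
    rw [pairRZ_sub, pairRZ_smul] at h2
    have h3 : pairRZ h ur / pairRZ h x < N := hN₀.trans (by exact_mod_cast hlt')
    rw [div_lt_iff_of_neg hlt] at h3
    linarith
  -- the extremal cone of `s ∩ t` in `t` contains a relative interior point, so it is all of `t`
  have hts : coneOf t ⊆ coneOf s := by
    obtain ⟨t', ht', e⟩ := F.inters s hs t ht
    have hE := hext t ht t' ht' (by rw [e]; exact Set.inter_subset_right)
    rintro y ⟨d, hd, rfl⟩
    refine sum_mem_coneOf _ _ fun v hv => smul_mem_coneOf (hd v) ?_
    have : (fun i => (v i : ℝ)) ∈ coneOf t' := by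
      refine hE _ (gen_mem_coneOf hv) (∑ w ∈ t.erase v, fun i => (w i : ℝ))
        (sum_mem_coneOf _ _ fun w hw => gen_mem_coneOf (Finset.mem_of_mem_erase hw)) ?_
      rw [Finset.add_sum_erase t (fun w => fun i => (w i : ℝ)) hv, e]
      exact ⟨hxs, hx⟩
    rw [e] at this
    exact this.1
  obtain ⟨N, hN⟩ := hinf.nonempty
  have h1 := hc N
  rw [show c N = ⟨s, hs⟩ from hN] at h1
  have h2 := hf1 s hs hts _ h1
  rw [pairRZ_sub, pairRZ_smul, hf2 s hs hts x hx, pairRZ_intCast] at h2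
  have h3 := hu (f s) (Finset.mem_image_of_mem _ (Finset.mem_filter.2 ⟨hs, hts⟩))
  rw [dotProduct_comm] at h3
  have h4 : (0 : ℝ) < ((f s ⬝ᵥ u : ℤ) : ℝ) := by exact_mod_cast h3
  linarith

/-- On a strongly convex cone some functional of the dual monoid is strictly positive on all
nonzero generators. -/
lemma exists_pos_of_stronglyConvex {n : ℕ} {s : Finset (Fin n → ℤ)}
    (hs : ∀ x, x ∈ coneOf s → -x ∈ coneOf s → x = 0) :
    ∃ m ∈ dualMonoid s, ∀ u ∈ s, m ⬝ᵥ u = 0 → u = 0 := by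
  obtain ⟨m, hm, h⟩ := exists_dual_pos s
  refine ⟨m, hm, fun u hu h0 => ?_⟩
  rcases h u hu with h1 | h1
  · exact absurd h0 h1.ne'
  · have h2 := hs _ (gen_mem_coneOf hu) (by convert h1 using 1; funext i; simp)
    funext i
    have := congrFun h2 i
    simpa using this

/-- If `m` is strictly positive on the nonzero generators of a cone, the face it cuts out is
`{0}`. -/
lemma mem_coneOf_zero_part {n : ℕ} {s : Finset (Fin n → ℤ)} {m : Fin n → ℤ}
    (hm : m ∈ dualMonoid s) (h : ∀ u ∈ s, m ⬝ᵥ u = 0 → u = 0) :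
    {x ∈ coneOf s | pairRZ m x = 0} = {0} := by
  ext x
  constructor
  · rintro ⟨⟨c, hc, rfl⟩, h0⟩
    rw [pairRZ_sum] at h0
    have hnn : ∀ u ∈ s, 0 ≤ pairRZ m (c u • fun i => (u i : ℝ)) := fun u hu =>
      hm _ (smul_mem_coneOf (hc u) (gen_mem_coneOf hu))
    rw [Finset.sum_eq_zero_iff_of_nonneg hnn] at h0
    refine Finset.sum_eq_zero fun u hu => ?_
    have h3 := h0 u hu
    rw [pairRZ_smul, pairRZ_intCast, mul_eq_zero] at h3
    rcases h3 with h3 | h3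
    · rw [h3, zero_smul]
    · have := h u hu (by exact_mod_cast h3)
      subst this
      funext i; simp
  · rintro rfl
    exact ⟨zero_mem_coneOf s, by simp [pairRZ]⟩

/-! ### Semigroup rings of cones -/

/-- The character `χ^m` as an element of `k[σ^∨ ∩ M]`. -/
noncomputable def chi (k : Type) [Field k] {n : ℕ} {s : Finset (Fin n → ℤ)} (m : Fin n → ℤ)
    (hm : m ∈ dualMonoid s) : sectionRing k s := AddMonoidAlgebra.single ⟨m, hm⟩ 1

section Rings

variable {k : Type} [Field k] {n : ℕ} {s t : Finset (Fin n → ℤ)}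

theorem chi_mul {a b : Fin n → ℤ} (ha : a ∈ dualMonoid s) (hb : b ∈ dualMonoid s) :
    chi k a ha * chi k b hb = chi k (a + b) (add_mem ha hb) := by
  simp only [chi, AddMonoidAlgebra.single_mul_single, mul_one]
  rfl

theorem chi_zero : chi k (0 : Fin n → ℤ) (zero_mem (dualMonoid s)) = 1 := rfl

theorem chi_congr {a b : Fin n → ℤ} (h : a = b) (ha : a ∈ dualMonoid s) (hb : b ∈ dualMonoid s) :
    chi k a ha = chi k b hb := by
  subst h; rfl

theorem chi_pow {a : Fin n → ℤ} (ha : a ∈ dualMonoid s) (N : ℕ) :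
    chi k a ha ^ N = chi k (N • a) (nsmul_mem ha N) := by
  induction N with
  | zero => rw [pow_zero, ← chi_zero]; exact chi_congr (by simp) _ _
  | succ N ih => rw [pow_succ, ih, chi_mul]; exact chi_congr (by simp [add_mul]) _ _

theorem restrictHom_chi (h : coneOf t ⊆ coneOf s) {a : Fin n → ℤ} (ha : a ∈ dualMonoid s) :
    restrictHom k h (chi k a ha) = chi k a (dualMonoid_antitone h ha) := by
  simp [restrictHom, chi, AddMonoidAlgebra.mapDomain_single]
  rfl

theorem restrictHom_algebraMap (h : coneOf t ⊆ coneOf s) (c : k) :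
    restrictHom k h (algebraMap k (sectionRing k s) c) = algebraMap k (sectionRing k t) c := by
  simp [restrictHom, AddMonoidAlgebra.mapDomain_single]

theorem restrictHom_injective (h : coneOf t ⊆ coneOf s) :
    Function.Injective (restrictHom k h) := by
  apply AddMonoidAlgebra.mapDomain_injective
  exact AddSubmonoid.inclusion_injective _

theorem single_eq (m : dualMonoid s) (c : k) :
    (AddMonoidAlgebra.single m c : sectionRing k s) =
      algebraMap k (sectionRing k s) c * chi k m.1 m.2 := by
  simp [chi, AddMonoidAlgebra.single_mul_single]

theorem sectionRing_induction {P : sectionRing k s → Prop} (f : sectionRing k s)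
    (h1 : ∀ c : k, P (algebraMap k _ c)) (h2 : ∀ m hm, P (chi k m hm))
    (hadd : ∀ f g, P f → P g → P (f + g)) (hmul : ∀ f g, P f → P g → P (f * g)) : P f := by
  refine AddMonoidAlgebra.induction_on f ?_ hadd ?_
  · intro m
    exact h2 m.1 m.2
  · intro r f hf
    rw [Algebra.smul_def]
    exact hmul _ _ (h1 r) hf

/-- If `τ` is the face of `σ` cut out by `m`, then `k[τ^∨ ∩ M]` is the localization of
`k[σ^∨ ∩ M]` at `χ^m`; hence a homomorphism inverting `χ^m` extends to `k[τ^∨ ∩ M]`. -/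
theorem exists_extend {R : Type*} [CommRing R] (h : coneOf t ⊆ coneOf s) {m : Fin n → ℤ}
    (hm : m ∈ dualMonoid s) (hface : coneOf t = {x ∈ coneOf s | pairRZ m x = 0})
    (φ : sectionRing k s →+* R) (hφ : IsUnit (φ (chi k m hm))) :
    ∃ ψ : sectionRing k t →+* R, ψ.comp (restrictHom k h) = φ := by
  let _ := (restrictHom k h).toAlgebra
  have hmneg : -m ∈ dualMonoid t := by
    intro x hx
    rw [hface] at hx
    rw [pairRZ_neg_left, hx.2, neg_zero]
  -- every element of `k[τ^∨ ∩ M]` becomes regular on `U_σ` after multiplication by `χ^(N m)`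
  have key : ∀ f : sectionRing k t, ∃ N₀ : ℕ, ∀ N, N₀ ≤ N → ∃ a,
      f * restrictHom k h (chi k m hm) ^ N = restrictHom k h a := by
    intro f
    induction f using sectionRing_induction with
    | h1 c =>
      refine ⟨0, fun N _ => ⟨algebraMap k _ c * chi k m hm ^ N, ?_⟩⟩
      rw [map_mul, restrictHom_algebraMap, map_pow]
    | h2 b hb =>
      obtain ⟨N₀, hN⟩ := exists_add_nsmul_mem_dual (b := b) hm (by
        intro u hu hmu
        have hut : (fun i => (u i : ℝ)) ∈ coneOf t := by
          rw [hface]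
          refine ⟨gen_mem_coneOf hu, ?_⟩
          rw [pairRZ_intCast, hmu]; simp
        have := hb _ hut
        rw [pairRZ_intCast] at this
        exact_mod_cast this)
      refine ⟨N₀, fun N hNN => ⟨chi k _ (hN N hNN), ?_⟩⟩
      rw [restrictHom_chi, restrictHom_chi, chi_pow, chi_mul]
    | hadd f g hf hg =>
      obtain ⟨N1, h1⟩ := hf
      obtain ⟨N2, h2⟩ := hg
      refine ⟨max N1 N2, fun N hN => ?_⟩
      obtain ⟨a, ha⟩ := h1 N (le_trans (le_max_left _ _) hN)
      obtain ⟨b, hb⟩ := h2 N (le_trans (le_max_right _ _) hN)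
      exact ⟨a + b, by rw [add_mul, ha, hb, map_add]⟩
    | hmul f g hf hg =>
      obtain ⟨N1, h1⟩ := hf
      obtain ⟨N2, h2⟩ := hg
      refine ⟨N1 + N2, fun N hN => ?_⟩
      obtain ⟨a, ha⟩ := h1 N1 le_rfl
      obtain ⟨b, hb⟩ := h2 (N - N1) (by omega)
      refine ⟨a * b, ?_⟩
      rw [map_mul, ← ha, ← hb]
      have : N = N1 + (N - N1) := by omega
      conv_lhs => rw [this, pow_add]
      ring
  have : IsLocalization.Away (chi k m hm) (sectionRing k t) := by
    refine IsLocalization.Away.mk _ ?_ ?_ ?_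
    · refine IsUnit.of_mul_eq_one (chi k (-m) hmneg) ?_
      change restrictHom k h _ * _ = 1
      rw [restrictHom_chi, chi_mul, ← chi_zero]
      exact chi_congr (by simp) _ _
    · intro f
      obtain ⟨N, hN⟩ := key f
      exact ⟨N, hN N le_rfl⟩
    · intro a b hab
      exact ⟨0, by rw [restrictHom_injective h hab]⟩
  exact ⟨IsLocalization.Away.lift (chi k m hm) hφ, IsLocalization.Away.lift_comp _ hφ⟩

/-- A homomorphism from `k[σ^∨ ∩ M]` to `K` that takes values in `R ⊆ K` on constants and on
characters factors through `R`. -/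
theorem exists_factor {R K : Type*} [CommRing R] [Field K] [Algebra R K]
    (hinj : Function.Injective (algebraMap R K)) (φ : sectionRing k s →+* K)
    (h1 : ∀ c : k, φ (algebraMap k _ c) ∈ (algebraMap R K).range)
    (h2 : ∀ m hm, φ (chi k m hm) ∈ (algebraMap R K).range) :
    ∃ ψ : sectionRing k s →+* R, (algebraMap R K).comp ψ = φ := by
  have h : ∀ f, φ f ∈ (algebraMap R K).range := by
    intro f
    induction f using sectionRing_induction with
    | h1 c => exact h1 c
    | h2 m hm => exact h2 m hm
    | hadd f g hf hg => rw [map_add]; exact add_mem hf hg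
    | hmul f g hf hg => rw [map_mul]; exact mul_mem hf hg
  let e : R ≃+* (algebraMap R K).range := RingEquiv.ofBijective (algebraMap R K).rangeRestrict
    ⟨fun a b hab => hinj (congrArg Subtype.val hab), (algebraMap R K).rangeRestrict_surjective⟩
  refine ⟨e.symm.toRingHom.comp (φ.codRestrict _ h), ?_⟩
  refine RingHom.ext fun f => ?_
  change (e (e.symm (φ.codRestrict _ h f)) : K) = φ f
  rw [RingEquiv.apply_symm_apply]
  rfl

/-- The `K`-point of the chart `U_σ` given by the one-parameter subgroup `u` evaluated at
a nonzero `x ∈ K`: it sends `χ^m` to `x^⟨m,u⟩`. -/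
theorem exists_oneParam {K : Type*} [Field K] (i : k →+* K) (s : Finset (Fin n → ℤ))
    (x : K) (hx : x ≠ 0) (u : Fin n → ℤ) : ∃ φ : sectionRing k s →+* K,
      (∀ c : k, φ (algebraMap k _ c) = i c) ∧ ∀ m hm, φ (chi k m hm) = x ^ (m ⬝ᵥ u) := by
  let _ := i.toAlgebra
  let g : Multiplicative (dualMonoid s) →* K :=
    { toFun := fun m => x ^ (m.toAdd.1 ⬝ᵥ u)
      map_one' := by simp
      map_mul' := by intro a b; simp [add_dotProduct, zpow_add₀ hx] }
  refine ⟨(AddMonoidAlgebra.lift k K (dualMonoid s) g).toRingHom, ?_, ?_⟩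
  · intro c
    exact (AddMonoidAlgebra.lift k K (dualMonoid s) g).commutes c
  · intro m hm
    change AddMonoidAlgebra.lift k K (dualMonoid s) g (AddMonoidAlgebra.single _ 1) = _
    rw [AddMonoidAlgebra.lift_single, one_smul]
    rfl

open Classical in
/-- The distinguished point of `U_τ`: it sends `χ^m` to `1` if `m` vanishes on `τ`, and to `0`
otherwise. -/
theorem exists_distinguished (k : Type) [Field k] (t : Finset (Fin n → ℤ)) :
    ∃ γ : sectionRing k t →+* k, (∀ c : k, γ (algebraMap k _ c) = c) ∧
      ∀ m hm, γ (chi k m hm) = if ∀ x ∈ coneOf t, pairRZ m x = 0 then 1 else 0 := by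
  let g : Multiplicative (dualMonoid t) →* k :=
    { toFun := fun m => if ∀ x ∈ coneOf t, pairRZ m.toAdd.1 x = 0 then 1 else 0
      map_one' := by
        rw [if_pos]
        intro x _
        simp [pairRZ]
      map_mul' := by
        intro a b
        have : (∀ x ∈ coneOf t, pairRZ (a * b).toAdd.1 x = 0) ↔
            (∀ x ∈ coneOf t, pairRZ a.toAdd.1 x = 0) ∧ (∀ x ∈ coneOf t, pairRZ b.toAdd.1 x = 0) := by
          rw [← forall₂_and]
          refine forall₂_congr fun x hx => ?_
          have h1 := a.toAdd.2 x hx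
          have h2 := b.toAdd.2 x hx
          have h3 : pairRZ (a * b).toAdd.1 x = pairRZ a.toAdd.1 x + pairRZ b.toAdd.1 x :=
            pairRZ_add_left _ _ _
          rw [h3]
          constructor
          · intro h; constructor <;> linarith
          · intro h; linarith [h.1, h.2]
        simp only [this]
        split_ifs <;> simp_all }
  refine ⟨(AddMonoidAlgebra.lift k k (dualMonoid t) g).toRingHom, ?_, ?_⟩
  · intro c
    exact (AddMonoidAlgebra.lift k k (dualMonoid t) g).commutes c
  · intro m hm
    change AddMonoidAlgebra.lift k k (dualMonoid t) g (AddMonoidAlgebra.single _ 1) = _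
    rw [AddMonoidAlgebra.lift_single, one_smul]
    rfl

end Rings

/-! ### Extremality from localization -/

section Rings2
variable {k : Type} [Field k] {n : ℕ} {s t : Finset (Fin n → ℤ)}

/-- An element with nonzero value has a monomial whose character has nonzero value. -/
theorem exists_coeff_ne_zero {R : Type*} [Semiring R] (γ : sectionRing k s →+* R)
    (f : sectionRing k s) (hf : γ f ≠ 0) :
    ∃ c : dualMonoid s, f.coeff c ≠ 0 ∧ γ (chi k c.1 c.2) ≠ 0 := by
  by_contra! hcon
  apply hf
  rw [← AddMonoidAlgebra.sum_coeff_single f, Finsupp.sum, map_sum]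
  refine Finset.sum_eq_zero fun c hc => ?_
  rw [single_eq, map_mul, hcon c (Finsupp.mem_support_iff.1 hc), mul_zero]

/-- If `k[σ^∨ ∩ M] → k[σ^∨ ∩ M]_p`, with `p` the image in `U_σ` of a rational point of
the closed orbit of `U_τ`, `τ ⊆ σ`, extends to `k[τ^∨ ∩ M]`, then `τ` is extremal in `σ`. -/
theorem isExtremalIn_of_localization (hs : ∀ x, x ∈ coneOf s → -x ∈ coneOf s → x = 0)
    (h : coneOf t ⊆ coneOf s) (γ : sectionRing k s →+* k)
    (hγ : ∀ m hm, γ (chi k m hm) ≠ 0 → ∀ x ∈ coneOf t, pairRZ m x = 0)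
    (p : Ideal (sectionRing k s)) [p.IsPrime] (hp : p = RingHom.ker γ)
    (ρ : sectionRing k t →+* Localization.AtPrime p)
    (hρ : ρ.comp (restrictHom k h) = algebraMap _ _) :
    IsExtremalIn (coneOf t) (coneOf s) := by
  -- an element of `τ^∨ ∩ M` lies in `σ^∨` after adding some `c ∈ σ^∨ ∩ τ^⊥`: the image of `χ^b`
  -- is a fraction whose denominator has a monomial `χ^c` not vanishing at the distinguished point
  have key : ∀ b ∈ dualMonoid t, ∃ c ∈ dualMonoid s, (∀ x ∈ coneOf t, pairRZ c x = 0) ∧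
      b + c ∈ dualMonoid s := by
    intro b hb
    obtain ⟨m, hm, hpos⟩ := exists_pos_of_stronglyConvex hs
    obtain ⟨N, hN⟩ := exists_add_nsmul_mem_dual (b := b) hm (by
      intro u hu h0
      rw [hpos u hu h0]; simp)
    have ha1 := hN N le_rfl
    have ha2 : N • m ∈ dualMonoid s := nsmul_mem hm N
    have e1 : ρ (chi k b hb) * algebraMap _ (Localization.AtPrime p) (chi k _ ha2) =
        algebraMap _ (Localization.AtPrime p) (chi k _ ha1) := by
      rw [← hρ, RingHom.comp_apply, RingHom.comp_apply, restrictHom_chi, restrictHom_chi,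
        ← map_mul, chi_mul]
    obtain ⟨⟨f, g⟩, hfg⟩ := IsLocalization.surj p.primeCompl (ρ (chi k b hb))
    have e2 : algebraMap _ (Localization.AtPrime p) (chi k _ ha1 * g.1) =
        algebraMap _ (Localization.AtPrime p) (chi k _ ha2 * f) := by
      rw [map_mul, map_mul, ← e1, ← hfg]
      ring
    obtain ⟨d, hd⟩ := IsLocalization.exists_of_eq (M := p.primeCompl) e2
    have hdg : γ (d.1 * g.1) ≠ 0 := by
      have : d.1 * g.1 ∈ p.primeCompl := mul_mem d.2 g.2
      intro h0
      exact this (hp.ge h0)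
    obtain ⟨c, hc, hc'⟩ := exists_coeff_ne_zero γ _ hdg
    refine ⟨c.1, c.2, hγ _ _ hc', ?_⟩
    have e3 : chi k _ ha1 * (d.1 * g.1) = chi k _ ha2 * (d.1 * f) := by
      rw [mul_left_comm, hd]; ring
    -- compare coefficients of `χ^(b + N m + c)` on both sides
    have e4 := congrArg (fun F => F.coeff (⟨_, ha1⟩ + c)) e3
    simp only [chi] at e4
    rw [AddMonoidAlgebra.coeff_single_mul_add, one_mul] at e4
    by_contra hcon
    rw [AddMonoidAlgebra.coeff_single_mul_of_forall_add_ne] at e4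
    · exact hc e4
    · intro d' hd'
      apply hcon
      have := congrArg Subtype.val hd'
      simp only [AddSubmonoid.coe_add] at this
      have h2 : b + c.1 = d'.1 := by
        have : N • m + d'.1 = N • m + (b + c.1) := by rw [this]; abel
        exact (add_left_cancel this).symm
      rw [h2]
      exact d'.2
  intro x hx y hy hxy
  refine mem_coneOf_of_dual fun b hb => ?_
  obtain ⟨c, hc, hc0, hbc⟩ := key b hb
  have h1 := hc x hx
  have h2 := hc y hy
  have h3 := hc0 _ hxy
  rw [pairRZ_add] at h3
  have h4 := hbc x hx
  rw [pairRZ_add_left] at h4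
  linarith

theorem algebraMap_finiteType (s : Finset (Fin n → ℤ)) :
    (algebraMap k (sectionRing k s)).FiniteType := by
  have := dualMonoid_fg s
  have : Algebra.FiniteType k (sectionRing k s) := inferInstance
  exact (RingHom.finiteType_algebraMap).2 this

end Rings2

/-! ### Charts of a toric model -/

section Schemes

/-- A morphism from a local scheme factors through any open subscheme containing the image of
the closed point. -/
theorem exists_lift_of_local {R : Type} [CommRing R] [IsLocalRing R] {U X : Scheme.{0}}
    (g : Spec (CommRingCat.of R) ⟶ X) (f : U ⟶ X) [IsOpenImmersion f]
    (h : g.base (IsLocalRing.closedPoint R) ∈ Set.range f.base) :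
    ∃ l : Spec (CommRingCat.of R) ⟶ U, l ≫ f = g := by
  have H : Set.range g ⊆ Set.range f := by
    rintro _ ⟨x, rfl⟩
    exact ((IsLocalRing.specializes_closedPoint (R := R) x).map g.continuous).mem_open
      f.isOpenEmbedding.isOpen_range h
  exact ⟨IsOpenImmersion.lift f g H, IsOpenImmersion.lift_fac f g H⟩

theorem exists_ringHom_of_local {R B : Type} [CommRing R] [IsLocalRing R] [CommRing B]
    {X : Scheme.{0}} (g : Spec (CommRingCat.of R) ⟶ X) (f : Spec (CommRingCat.of B) ⟶ X)
    [IsOpenImmersion f] (h : g.base (IsLocalRing.closedPoint R) ∈ Set.range f.base) :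
    ∃ φ : B →+* R, Spec.map (CommRingCat.ofHom φ) ≫ f = g := by
  obtain ⟨l, hl⟩ := exists_lift_of_local g f h
  obtain ⟨φ, rfl⟩ := Spec.map_surjective l
  exact ⟨φ.hom, hl⟩

/-- Open immersions are monomorphisms, so a morphism into an affine chart determines its ring
homomorphism. -/
theorem SpecMap_comp_patch_injective {R B : Type} [CommRing R] [CommRing B]
    {X : Scheme.{0}} (f : Spec (CommRingCat.of B) ⟶ X) [IsOpenImmersion f] {φ ψ : B →+* R}
    (h : Spec.map (CommRingCat.ofHom φ) ≫ f = Spec.map (CommRingCat.ofHom ψ) ≫ f) : φ = ψ := by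
  have h1 := (cancel_mono f).1 h
  have h2 := Spec.map_injective h1
  exact congrArg CommRingCat.Hom.hom h2

theorem SpecMap_comp_ofHom {A B C : Type} [CommRing A] [CommRing B] [CommRing C]
    (f : A →+* B) (g : B →+* C) :
    Spec.map (CommRingCat.ofHom (g.comp f)) =
      Spec.map (CommRingCat.ofHom g) ≫ Spec.map (CommRingCat.ofHom f) := by
  rw [CommRingCat.ofHom_comp, Spec.map_comp]

namespace ToricModel

variable {k : Type} [Field k] {n : ℕ} {F : FanData n} (T : ToricModel k F)

/-- The charts as an open cover. -/
noncomputable def cover : T.X.OpenCover where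
  I₀ := {s // s ∈ F.cones}
  X s := Spec (CommRingCat.of (sectionRing k s.1))
  f s := T.patch s.1 s.2
  mem₀ := by
    rw [Scheme.presieve₀_mem_precoverage_iff]
    refine ⟨fun x => ?_, fun s => T.patch_open s.1 s.2⟩
    obtain ⟨s, hs, y, hy⟩ := T.patch_cover x
    exact ⟨⟨s, hs⟩, y, hy⟩

/-- The charts are of finite type by Gordan's lemma. -/
theorem locallyOfFiniteType : LocallyOfFiniteType T.str := by
  have : IsZariskiLocalAtSource @LocallyOfFiniteType :=
    HasRingHomProperty.instIsZariskiLocalAtSource (Q := RingHom.FiniteType)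
  refine IsZariskiLocalAtSource.of_openCover (P := @LocallyOfFiniteType) T.cover fun s => ?_
  change LocallyOfFiniteType (T.patch s.1 s.2 ≫ T.str)
  rw [T.patch_str, HasRingHomProperty.Spec_iff (P := @LocallyOfFiniteType)]
  exact algebraMap_finiteType s.1

theorem compactSpace : CompactSpace T.X := by
  have : Finite T.cover.I₀ := inferInstanceAs (Finite {s // s ∈ F.cones})
  have (i : T.cover.I₀) : CompactSpace (T.cover.X i) :=
    inferInstanceAs (CompactSpace (Spec (CommRingCat.of (sectionRing k i.1))))
  exact Scheme.OpenCover.compactSpace T.cover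

theorem quasiCompact : QuasiCompact T.str := by
  have := T.compactSpace
  exact (quasiCompact_iff_compactSpace T.str).2 this

theorem quasiSeparated : QuasiSeparated T.str := by
  have := T.locallyOfFiniteType
  have : IsLocallyNoetherian T.X := LocallyOfFiniteType.isLocallyNoetherian T.str
  infer_instance

/-- A point with values in a local ring lies in one of the charts. -/
theorem exists_chart {R : Type} [CommRing R] [IsLocalRing R]
    (g : Spec (CommRingCat.of R) ⟶ T.X) :
    ∃ s, ∃ hs : s ∈ F.cones, ∃ φ : sectionRing k s →+* R,
      Spec.map (CommRingCat.ofHom φ) ≫ T.patch s hs = g := by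
  obtain ⟨s, hs, y, hy⟩ := T.patch_cover (g.base (IsLocalRing.closedPoint R))
  have := T.patch_open s hs
  exact ⟨s, hs, exists_ringHom_of_local g (T.patch s hs) ⟨y, hy⟩⟩

/-- In a fan carrying a toric model, a cone contained in another one is extremal in it: the
inclusion of charts is an open immersion, hence an isomorphism on the local rings at the
distinguished point of the smaller chart. -/
theorem isExtremalIn (T : ToricModel k F) (s) (hs : s ∈ F.cones) (t) (ht : t ∈ F.cones)
    (h : coneOf t ⊆ coneOf s) : IsExtremalIn (coneOf t) (coneOf s) := by
  have := T.patch_open s hs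
  have := T.patch_open t ht
  have hopen : IsOpenImmersion (Spec.map (CommRingCat.ofHom (restrictHom k h))) := by
    have : IsOpenImmersion (Spec.map (CommRingCat.ofHom (restrictHom k h)) ≫ T.patch s hs) := by
      rw [← T.patch_compat]; infer_instance
    exact IsOpenImmersion.of_comp _ (T.patch s hs)
  obtain ⟨γ, -, hγ⟩ := exists_distinguished k t
  let p : Ideal (sectionRing k s) := RingHom.ker (γ.comp (restrictHom k h))
  have hp : p.IsPrime := RingHom.ker_isPrime _
  obtain ⟨ρ, hρ⟩ := exists_ringHom_of_local
    (Spec.map (CommRingCat.ofHom (algebraMap (sectionRing k s) (Localization.AtPrime p))))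
    (Spec.map (CommRingCat.ofHom (restrictHom k h))) (by
      refine ⟨⟨RingHom.ker γ, RingHom.ker_isPrime _⟩, ?_⟩
      apply PrimeSpectrum.ext
      change (RingHom.ker γ).comap (restrictHom k h) =
        (IsLocalRing.maximalIdeal (Localization.AtPrime p)).comap (algebraMap _ _)
      exact (Localization.AtPrime.under_maximalIdeal (I := p)).symm)
  rw [← SpecMap_comp_ofHom] at hρ
  have hρ' := congrArg CommRingCat.Hom.hom (Spec.map_injective hρ)
  refine isExtremalIn_of_localization (F.strongly_convex s hs) h _ ?_ p rfl ρ hρ'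
  intro m hm h0
  rw [RingHom.comp_apply, restrictHom_chi, hγ] at h0
  by_contra hcon
  exact h0 (if_neg hcon)

end ToricModel
end Schemes

/-! ### The valuative criterion -/

namespace ToricModel

variable {k : Type} [Field k] {n : ℕ} {F : FanData n} (T : ToricModel k F)

theorem chart_str {R : Type} [CommRing R] {s} (hs : s ∈ F.cones) (φ : sectionRing k s →+* R) :
    (Spec.map (CommRingCat.ofHom φ) ≫ T.patch s hs) ≫ T.str =
      Spec.map (CommRingCat.ofHom (φ.comp (algebraMap k (sectionRing k s)))) := by
  rw [Category.assoc, T.patch_str, ← SpecMap_comp_ofHom]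

/-- Gluing on `R`-points: restricting from `U_σ` to `U_τ` does not change the point of `X`. -/
theorem chart_restrict {R : Type} [CommRing R] {s} (hs : s ∈ F.cones) {t} (ht : t ∈ F.cones)
    (h : coneOf t ⊆ coneOf s) (ψ : sectionRing k t →+* R) :
    Spec.map (CommRingCat.ofHom (ψ.comp (restrictHom k h))) ≫ T.patch s hs =
      Spec.map (CommRingCat.ofHom ψ) ≫ T.patch t ht := by
  rw [SpecMap_comp_ofHom, Category.assoc, ← T.patch_compat]

/-- Every `K`-point lies in the closed orbit of some chart `U_τ`: `χ^m` vanishes at it unless `m`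
vanishes on `τ`. Here `τ` is a minimal cone whose chart contains the point. -/
theorem exists_orbit_chart {K : Type} [Field K] (g : Spec (CommRingCat.of K) ⟶ T.X) :
    ∃ t, ∃ ht : t ∈ F.cones, ∃ φ : sectionRing k t →+* K,
      Spec.map (CommRingCat.ofHom φ) ≫ T.patch t ht = g ∧
      ∀ m hm, φ (chi k m hm) ≠ 0 → ∀ x ∈ coneOf t, pairRZ m x = 0 := by
  classical
  obtain ⟨t, ⟨ht, φ, hφ⟩, hmin⟩ := Set.Finite.exists_minimalFor (fun s => coneOf s)
    {s | ∃ hs : s ∈ F.cones, ∃ φ : sectionRing k s →+* K,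
      Spec.map (CommRingCat.ofHom φ) ≫ T.patch s hs = g}
    (F.cones.finite_toSet.subset fun s hs => hs.1) (T.exists_chart g)
  refine ⟨t, ht, φ, hφ, fun m hm h0 => ?_⟩
  obtain ⟨t', ht', hface⟩ := F.faces t ht m hm
  have hsub : coneOf t' ⊆ coneOf t := by rw [hface]; exact fun x hx => hx.1
  obtain ⟨ψ, hψ⟩ := exists_extend hsub hm hface φ (isUnit_iff_ne_zero.2 h0)
  have h1 := hmin (j := t') ⟨ht', ψ, by rw [← T.chart_restrict ht ht' hsub, hψ, hφ]⟩ hsub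
  intro x hx
  have h2 := h1 hx
  simp only [hface] at h2
  exact h2.2

/-- Existence in the valuative criterion. If the `K`-point `φ` lies in the orbit of `τ`, let `S` be
the set of `m ∈ τ^⊥` such that `φ(χ^m)` is not in the valuation ring. The cone `σ ⊇ τ` provided by
`exists_star_cone` satisfies `φ(χ^m) ∈ R` for all `m ∈ σ^∨ ∩ M`, so `φ` extends to an `R`-point
of `U_σ`. -/
theorem exists_lift (hsupp : (⋃ s ∈ F.cones, coneOf s) = Set.univ) {R K : Type} [CommRing R]
    [IsDomain R] [ValuationRing R] [Field K] [Algebra R K] [IsFractionRing R K]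
    (g : Spec (CommRingCat.of K) ⟶ T.X) (j : k →+* R)
    (comm : g ≫ T.str = Spec.map (CommRingCat.ofHom ((algebraMap R K).comp j))) :
    ∃ l : Spec (CommRingCat.of R) ⟶ T.X,
      Spec.map (CommRingCat.ofHom (algebraMap R K)) ≫ l = g ∧
        l ≫ T.str = Spec.map (CommRingCat.ofHom j) := by
  have hinj := IsFractionRing.injective R K
  obtain ⟨t, ht, φ, hφ, horb⟩ := T.exists_orbit_chart g
  have hconst : φ.comp (algebraMap k (sectionRing k t)) = (algebraMap R K).comp j := by
    rw [← hφ, chart_str] at comm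
    exact congrArg CommRingCat.Hom.hom (Spec.map_injective comm)
  have hval : ∀ x : K, x ∈ (algebraMap R K).range ∨ x⁻¹ ∈ (algebraMap R K).range :=
    fun x => ValuationRing.isInteger_or_isInteger R x
  obtain ⟨s, hs, hts, hS⟩ := exists_star_cone F T.isExtremalIn hsupp ht
    {m | ∃ hm : m ∈ dualMonoid t, (∀ x ∈ coneOf t, pairRZ m x = 0) ∧
      φ (chi k m hm) ∉ (algebraMap R K).range} (by
      rintro a ⟨ha, ha0, ha'⟩ b ⟨hb, hb0, hb'⟩
      refine ⟨add_mem ha hb, fun x hx => ?_, fun hab => ha' ?_⟩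
      · rw [pairRZ_add_left, ha0 x hx, hb0 x hx, add_zero]
      · have hbinv := (hval _).resolve_left hb'
        have hb1 : φ (chi k b hb) ≠ 0 := fun h0 => hb' (h0 ▸ zero_mem _)
        have := mul_mem hab hbinv
        rwa [← chi_mul ha hb, map_mul, mul_inv_cancel_right₀ hb1] at this)
    (by
      rintro ⟨h0, -, h⟩
      exact h (by rw [chi_zero, map_one]; exact one_mem _))
  obtain ⟨ψ, hψ⟩ := exists_factor (R := R) (K := K) hinj (φ.comp (restrictHom k hts)) (by
      intro c
      rw [RingHom.comp_apply, restrictHom_algebraMap]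
      exact ⟨j c, (RingHom.congr_fun hconst c).symm⟩) (by
      intro m hm
      rw [RingHom.comp_apply, restrictHom_chi]
      by_cases h0 : φ (chi k m (dualMonoid_antitone hts hm)) = 0
      · rw [h0]; exact zero_mem _
      · by_contra hcon
        exact hS m hm (horb m _ h0) ⟨dualMonoid_antitone hts hm, horb m _ h0, hcon⟩)
  refine ⟨Spec.map (CommRingCat.ofHom ψ) ≫ T.patch s hs, ?_, ?_⟩
  · rw [← Category.assoc, ← SpecMap_comp_ofHom, hψ, T.chart_restrict hs ht, hφ]
  · rw [chart_str]
    congr 2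
    refine RingHom.ext fun c => hinj ?_
    change ((algebraMap R K).comp ψ) (algebraMap k (sectionRing k s) c) = (algebraMap R K).comp j c
    rw [hψ, ← hconst, RingHom.comp_apply, restrictHom_algebraMap]
    rfl

/-- Uniqueness in the valuative criterion. Two `R`-points in `U_σ` and `U_σ₂` with the same generic
point have `φ(χ^m) φ₂(χ^(-m)) = 1` for the functional `m` separating `σ` from `σ₂`, so both lie
in the chart of `σ ∩ σ₂`, which is affine. -/
theorem lift_unique {R K : Type} [CommRing R] [IsDomain R] [IsLocalRing R] [Field K] [Algebra R K]
    (hinj : Function.Injective (algebraMap R K)) (l l' : Spec (CommRingCat.of R) ⟶ T.X)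
    (h : Spec.map (CommRingCat.ofHom (algebraMap R K)) ≫ l =
      Spec.map (CommRingCat.ofHom (algebraMap R K)) ≫ l') : l = l' := by
  obtain ⟨s, hs, φ, rfl⟩ := T.exists_chart l
  obtain ⟨s', hs', φ', rfl⟩ := T.exists_chart l'
  obtain ⟨t, ht, hcap⟩ := F.inters s hs s' hs'
  have hts : coneOf t ⊆ coneOf s := hcap.trans_subset Set.inter_subset_left
  have hts' : coneOf t ⊆ coneOf s' := hcap.trans_subset Set.inter_subset_right
  have := T.patch_open s hs
  have := T.patch_open s' hs'
  have := T.patch_open t ht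
  rw [← Category.assoc, ← Category.assoc, ← SpecMap_comp_ofHom, ← SpecMap_comp_ofHom] at h
  obtain ⟨χ, hχ⟩ := exists_ringHom_of_local
    (Spec.map (CommRingCat.ofHom ((algebraMap R K).comp φ)) ≫ T.patch s hs) (T.patch t ht) (by
      rw [T.patch_inter s hs s' hs' t ht hcap]
      refine ⟨?_, ?_⟩
      · exact ⟨_, rfl⟩
      · rw [h]
        exact ⟨_, rfl⟩)
  have e1 : χ.comp (restrictHom k hts) = (algebraMap R K).comp φ := by
    apply SpecMap_comp_patch_injective (T.patch s hs)
    rw [T.chart_restrict hs ht, hχ]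
  have e2 : χ.comp (restrictHom k hts') = (algebraMap R K).comp φ' := by
    apply SpecMap_comp_patch_injective (T.patch s' hs')
    rw [T.chart_restrict hs' ht, hχ, h]
  obtain ⟨m, hm, hm', hf, hf'⟩ := exists_separating hcap (T.isExtremalIn s hs t ht hts)
    (T.isExtremalIn s' hs' t ht hts')
  have hmul : φ (chi k m hm) * φ' (chi k (-m) hm') = 1 := by
    apply hinj
    have a1 := RingHom.congr_fun e1 (chi k m hm)
    have a2 := RingHom.congr_fun e2 (chi k (-m) hm')
    simp only [RingHom.comp_apply, restrictHom_chi] at a1 a2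
    rw [map_mul, ← a1, ← a2, ← map_mul, chi_mul, map_one, ← map_one χ, ← chi_zero]
    exact congrArg χ (chi_congr (add_neg_cancel m) _ _)
  obtain ⟨ψ, hψ⟩ := exists_extend hts hm hf φ (.of_mul_eq_one _ hmul)
  obtain ⟨ψ', hψ'⟩ := exists_extend hts' hm' hf' φ' (.of_mul_eq_one_right _ hmul)
  have hψψ : ψ = ψ' := by
    have b1 : (algebraMap R K).comp ψ = χ := by
      apply SpecMap_comp_patch_injective (T.patch t ht)
      rw [← T.chart_restrict hs ht hts, ← T.chart_restrict hs ht hts, RingHom.comp_assoc, hψ, e1]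
    have b2 : (algebraMap R K).comp ψ' = χ := by
      apply SpecMap_comp_patch_injective (T.patch t ht)
      rw [← T.chart_restrict hs' ht hts', ← T.chart_restrict hs' ht hts', RingHom.comp_assoc,
        hψ', e2]
    refine RingHom.ext fun f => hinj ?_
    exact RingHom.congr_fun (b1.trans b2.symm) f
  rw [← hψ, ← hψ', T.chart_restrict hs ht, T.chart_restrict hs' ht, hψψ]

theorem isProper_of_support (hsupp : (⋃ s ∈ F.cones, coneOf s) = Set.univ) : IsProper T.str := by
  have := T.quasiCompact
  have := T.quasiSeparated
  have := T.locallyOfFiniteType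
  refine IsProper.of_valuativeCriterion T.str (ValuativeCriterion.iff.2 ⟨?_, ?_⟩)
  · rintro ⟨R, K, g, i₂, comm⟩
    obtain ⟨j, rfl⟩ := Spec.map_surjective i₂
    obtain ⟨l, h1, h2⟩ := T.exists_lift hsupp g j.hom (by
      rw [comm.w, SpecMap_comp_ofHom]; rfl)
    exact ⟨⟨⟨l, h1, h2⟩⟩⟩
  · rintro ⟨R, K, g, i₂, comm⟩
    refine ⟨fun a b => ?_⟩
    apply CommSq.LiftStruct.ext
    exact T.lift_unique (IsFractionRing.injective R K) _ _ (a.fac_left.trans b.fac_left.symm)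

/-- If a lattice point `u` lies outside the support, then the one-parameter subgroup of `u` has no
limit as `x → 0`. The test is carried out on the `k((x))`-point `χ^m ↦ x^⟨m,u⟩` of the torus:
extending it to `k⟦x⟧` in the chart `U_σ` forces `⟨m,u⟩ ≥ 0` for all `m ∈ σ^∨ ∩ M`, that is,
`u ∈ σ`. -/
theorem support_of_isProper (h : IsProper T.str) :
    (⋃ s ∈ F.cones, coneOf s) = Set.univ := by
  by_contra hne
  obtain ⟨u, hu⟩ := exists_int_notMem_support F hne
  obtain ⟨s₀, hs₀⟩ := F.nonempty
  -- the cone `{0}` belongs to the fan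
  obtain ⟨m₀, hm₀, hpos⟩ := exists_pos_of_stronglyConvex (F.strongly_convex s₀ hs₀)
  obtain ⟨t, ht, htf⟩ := F.faces s₀ hs₀ m₀ hm₀
  rw [mem_coneOf_zero_part hm₀ hpos] at htf
  let R := PowerSeries k
  let K := FractionRing R
  have hinj := IsFractionRing.injective R K
  let x : K := algebraMap R K PowerSeries.X
  have hx : x ≠ 0 := fun h0 => PowerSeries.X_ne_zero (hinj (h0.trans (map_zero _).symm))
  obtain ⟨χ, hχ1, hχ2⟩ := exists_oneParam ((algebraMap R K).comp (algebraMap k R)) t x hx u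
  have hex : ValuativeCriterion.Existence T.str := by
    have := h
    rw [IsProper.eq_valuativeCriterion] at this
    exact this.1.1.1.existence
  have comm : (Spec.map (CommRingCat.ofHom χ) ≫ T.patch t ht) ≫ T.str =
      Spec.map (CommRingCat.ofHom (algebraMap R K)) ≫
        Spec.map (CommRingCat.ofHom (algebraMap k R)) := by
    rw [T.chart_str, ← SpecMap_comp_ofHom]
    congr 2
    exact RingHom.ext hχ1
  obtain ⟨⟨l, hl, -⟩⟩ := hex ⟨R, K, _, _, ⟨comm⟩⟩
  obtain ⟨s, hs, φ, rfl⟩ := T.exists_chart (R := R) l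
  have hts : coneOf t ⊆ coneOf s := by
    rw [htf]
    rintro _ rfl
    exact zero_mem_coneOf s
  have := T.patch_open s hs
  have e : (algebraMap R K).comp φ = χ.comp (restrictHom k hts) := by
    apply SpecMap_comp_patch_injective (T.patch s hs)
    rw [T.chart_restrict hs ht, SpecMap_comp_ofHom, Category.assoc]
    exact hl
  refine hu s hs (mem_coneOf_of_dual fun m hm => ?_)
  rw [pairRZ_intCast]
  have hm1 := RingHom.congr_fun e (chi k m hm)
  simp only [RingHom.comp_apply, restrictHom_chi, hχ2] at hm1
  by_contra hcon
  have hneg : m ⬝ᵥ u < 0 := by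
    by_contra h0
    exact hcon (by exact_mod_cast not_lt.1 h0)
  -- `x⁻¹` would be a power series
  obtain ⟨N, hN⟩ : ∃ N : ℕ, m ⬝ᵥ u = -((N : ℤ) + 1) := ⟨(-(m ⬝ᵥ u) - 1).toNat, by omega⟩
  have h1 : φ (chi k m hm) * PowerSeries.X ^ (N + 1) = 1 := by
    apply hinj
    rw [map_mul, hm1, hN, map_pow, map_one, zpow_neg]
    have : x ^ ((N : ℤ) + 1) = x ^ (N + 1) := by exact_mod_cast zpow_natCast x (N + 1)
    rw [this]
    exact inv_mul_cancel₀ (pow_ne_zero _ hx)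
  have h2 := congrArg PowerSeries.constantCoeff h1
  simp at h2

end ToricModel

theorem statement15 (k : Type) [Field k] (n : ℕ) (F : FanData n)
    (T : ToricModel k F) :
    IsProper T.str ↔ (⋃ s ∈ F.cones, coneOf s) = Set.univ :=
  ⟨T.support_of_isProper, T.isProper_of_support⟩
end
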